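/- Cosystolic norm of the Paley cochain: Let p be an odd prime and let k be an integer with 1 ≤ k < p. Let χ be the Legendre symbol modulo p (χ(x) = 1 if x is a nonzero quadratic residue mod p, χ(x) = −1 if x is a quadratic non-residue, χ(0) = 0). Define the Paley k-cochain φ_k on the full simplex Δ on the vertex set F_p by φ_k({x_0, …, x_k}) = 1 if χ(x_0 + ⋯ + x_k) = 1 and φ_k({x_0, …, x_k}) = 0 otherwise, for every (k+1)-element subset {x_0, …, x_k} of F_p. Then ‖φ_k‖_csy ≥ ((p−1)/(2p)) · C(p, k+1) − (2^{k+1}/(k+1)!) · p^{k+1−2^{−k}}, where C(p, k+1) is the binomial coefficient and p^{k+1−2^{−k}} denotes the real power of p with exponent k + 1 − 2^{−k}. -/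

import Mathlib

open Finset

section Simplicial

variable {V : Type*} [DecidableEq V]

/-- `X` is a finite abstract simplicial complex: a finite family of nonempty finite sets
closed under taking nonempty subsets. -/
def IsComplex (X : Finset (Finset V)) : Prop :=
  (∀ σ ∈ X, σ.Nonempty) ∧ ∀ σ ∈ X, ∀ τ ⊆ σ, τ.Nonempty → τ ∈ X

/-- The `k`-dimensional faces of `X` (faces of cardinality `k+1`). -/
def faces (X : Finset (Finset V)) (k : ℕ) : Finset (Finset V) :=
  X.filter fun σ => σ.card = k + 1

/-- The support of a `k`-cochain. -/
def csupp (X : Finset (Finset V)) (k : ℕ) (φ : Finset V → ZMod 2) : Finset (Finset V) :=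
  (faces X k).filter fun σ => φ σ ≠ 0

/-- The norm of a `k`-cochain. -/
def cnorm (X : Finset (Finset V)) (k : ℕ) (φ : Finset V → ZMod 2) : ℕ :=
  (csupp X k φ).card

/-- The coboundary of a `k`-cochain, as a `(k+1)`-cochain. -/
def cob (X : Finset (Finset V)) (k : ℕ) (φ : Finset V → ZMod 2) : Finset V → ZMod 2 :=
  fun τ => ∑ σ ∈ (faces X k).filter (fun σ => σ ⊆ τ), φ σ

/-- The cosystolic norm of a `k`-cochain, with the reduced convention at `k = 0`. -/
noncomputable def cosys (X : Finset (Finset V)) (k : ℕ) (φ : Finset V → ZMod 2) : ℕ :=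
  if k = 0 then
    min (cnorm X 0 φ) (cnorm X 0 fun σ => 1 + φ σ)
  else
    sInf {m | ∃ ψ : Finset V → ZMod 2, m = cnorm X k fun τ => φ τ + cob X (k - 1) ψ τ}

/-- The `k`-th (coboundary) Cheeger constant, valued in `ℝ≥0∞` (`⊤` if no cochain has
positive cosystolic norm). -/
noncomputable def cheeger (X : Finset (Finset V)) (k : ℕ) : ENNReal :=
  sInf {r : ENNReal | ∃ φ : Finset V → ZMod 2, 0 < cosys X k φ ∧
    r = (cnorm X (k + 1) (cob X k φ) : ENNReal) / (cosys X k φ : ENNReal)}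

/-- The boundary of a `k`-chain, as a `(k-1)`-chain. -/
def bdry (X : Finset (Finset V)) (k : ℕ) (c : Finset V → ZMod 2) : Finset V → ZMod 2 :=
  fun τ => ∑ σ ∈ (faces X k).filter (fun σ => τ ⊆ σ), c σ

/-- A `k`-cycle, with the reduced convention at `k = 0`. -/
def IsCycle (X : Finset (Finset V)) (k : ℕ) (c : Finset V → ZMod 2) : Prop :=
  if k = 0 then ∑ σ ∈ faces X 0, c σ = 0
  else ∀ τ ∈ faces X (k - 1), bdry X k c τ = 0

/-- Evaluation of a `k`-cochain on a `k`-chain. -/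
def eval (X : Finset (Finset V)) (k : ℕ) (φ c : Finset V → ZMod 2) : ZMod 2 :=
  ∑ σ ∈ faces X k, φ σ * c σ

end Simplicial

/-!
Adding a coboundary `dψ` to the Paley cochain multiplies its sign at a face `σ` by a product of
functions of the facets `σ \ {x}`, each of which does not see the vertex `x`. So, up to the few
faces with vertex sum `0`, the theorem says that `χ(x₀ + ⋯ + xₖ)` correlates weakly with such
products, and by symmetry this may be shown for all tuples instead of injective ones. Each use of
Cauchy–Schwarz eliminates one factor and replaces the product of the characters `χ(a - s)`, `a ∈ A`,
by the same product over two translates of `A`, which are disjoint for most pairs of translations.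
After `k - 1` rounds two variables are left, and Fourier analysis reduces the claim to the Weil
bound `|∑ χ(f(t)) ψ(t)| ≤ (deg f) √q` for squarefree split `f`.

The Weil bound is proved in two stages. Stepanov's method, over all extensions of the field, gives a
bound of the form `O(q^(n/2))` with a poor constant. The associated `L`-function is a polynomial of
degree at most `deg f`, and the weak bounds for its power sums force its inverse roots to have
modulus at most `√q`, which restores the constant.
-/

section Stepanov

open Polynomial

variable {K : Type*} [Field K]

lemma exists_sum_expand_mul_eq_zero {ι : Type*} [Fintype ι] (g : ι → K[X]) {A ℓ T : ℕ}
    (hg : ∀ i, (g i).natDegree + ℓ * A < T) (hT : T < Fintype.card ι * A) :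
    ∃ u : ι → K[X], u ≠ 0 ∧ (∀ i, (u i).degree < A) ∧ ∑ i, expand K ℓ (u i) * g i = 0 := by
  let Φ : (ι → degreeLT K A) →ₗ[K] K[X] := ∑ i, LinearMap.mulRight K (g i) ∘ₗ
    (expand K ℓ).toLinearMap ∘ₗ (degreeLT K A).subtype ∘ₗ LinearMap.proj i
  have Φ_apply (v) : Φ v = ∑ i, expand K ℓ (v i : K[X]) * g i := by simp [Φ]
  have Φ_mem (v) : Φ v ∈ degreeLT K T := by
    rw [Φ_apply]
    refine Submodule.sum_mem _ fun i _ => mem_degreeLT.2 (degree_le_natDegree.trans_lt ?_)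
    have hv : (v i : K[X]).natDegree ≤ A := natDegree_le_of_degree_le (mem_degreeLT.1 (v i).2).le
    have hmul := natDegree_mul_le (p := expand K ℓ (v i : K[X])) (q := g i)
    rw [natDegree_expand] at hmul
    have := Nat.mul_le_mul_right ℓ hv
    exact_mod_cast (by linarith [hg i] : _ < T)
  have finite_degreeLT (n) : FiniteDimensional K (degreeLT K n) :=
    (degreeLTEquiv K n).symm.finiteDimensional
  have finrank_degreeLT (n) : Module.finrank K (degreeLT K n) = n := by
    rw [(degreeLTEquiv K n).finrank_eq, Module.finrank_fin_fun]
  have := finite_degreeLT A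
  have := finite_degreeLT T
  have hker := LinearMap.ker_ne_bot_of_finrank_lt (f := Φ.codRestrict _ Φ_mem) (by
    simpa [finrank_degreeLT, Module.finrank_pi_fintype] using hT)
  obtain ⟨v, hv, hv0⟩ := Submodule.exists_mem_ne_zero_of_ne_bot hker
  refine ⟨fun i => v i, fun h0 => hv0 ?_, fun i => mem_degreeLT.1 (v i).2, ?_⟩
  · ext i : 2
    exact congrFun h0 i
  · rw [← Φ_apply]
    exact congrArg Subtype.val (LinearMap.mem_ker.1 hv)

lemma eq_zero_of_sq_mul_eq_C_mul_sq {f r s : K[X]} (hf : Squarefree f) (hdeg : 0 < f.natDegree)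
    {c : K} (hc : c ≠ 0) (h : r ^ 2 * f = C c * s ^ 2) : r = 0 ∧ s = 0 := by
  have hcu : IsUnit (C c) := isUnit_C.2 hc.isUnit
  have hr : r = 0 := by
    by_contra hr
    have hdvd : r ∣ s :=
      (IsIntegrallyClosed.pow_dvd_pow_iff two_ne_zero).1 (hcu.dvd_mul_left.1 ⟨f, h.symm⟩)
    obtain ⟨t, rfl⟩ := hdvd
    have hft : f = C c * t ^ 2 := mul_left_cancel₀ (pow_ne_zero 2 hr) (by rw [h]; ring)
    have ht : IsUnit t := hf t ⟨C c, by rw [hft]; ring⟩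
    exact hdeg.ne' (natDegree_eq_zero_of_isUnit (hft ▸ hcu.mul (ht.pow 2)))
  subst hr
  simpa [hc] using h.symm

lemma degree_sq_mul_lt {u v : K[X]} {A D M : ℕ} (hu : u.degree < A) (hv : v.natDegree ≤ D)
    (hM : 2 * A + D ≤ M) : (u ^ 2 * v).degree < M := by
  rcases eq_or_ne u 0 with rfl | hu0
  · simp
  have hu' : u.natDegree < A := (natDegree_lt_iff_degree_lt hu0).2 hu
  have hmul : (u ^ 2 * v).natDegree ≤ 2 * u.natDegree + v.natDegree :=
    natDegree_mul_le.trans (by gcongr; exact natDegree_pow_le)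
  exact degree_le_natDegree.trans_lt (by exact_mod_cast (by omega : (u ^ 2 * v).natDegree < M))

/-- Modulo `X ^ M` one has `(f ^ η) ^ 2 * f = f ^ M ≡ f(0) ^ M`, so the divisibility gives
`r ^ 2 * f ≡ f(0) ^ M * s ^ 2`, which is an equality for degree reasons. -/
lemma eq_zero_of_X_pow_dvd_add_mul_pow {p : ℕ} [Fact p.Prime] [CharP K p] {c η A : ℕ}
    (hη : p ^ c = 2 * η + 1) {f r s : K[X]} (hf : Squarefree f) (hdeg : 0 < f.natDegree)
    (hf0 : f.coeff 0 ≠ 0) (hA : 2 * A + f.natDegree ≤ p ^ c) (hr : r.degree < A)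
    (hs : s.degree < A) (h : X ^ p ^ c ∣ r + s * f ^ η) : r = 0 ∧ s = 0 := by
  set M := p ^ c with hM
  have hfM : X ^ M ∣ f ^ M - C (f.coeff 0 ^ M) := by
    rw [C_pow, hM, ← sub_pow_char_pow]
    exact pow_dvd_pow_of_dvd (X_dvd_iff.2 (by simp)) _
  have hdvd : X ^ M ∣ r ^ 2 * f - C (f.coeff 0 ^ M) * s ^ 2 := by
    have key : r ^ 2 * f - C (f.coeff 0 ^ M) * s ^ 2
        = (r + s * f ^ η) * ((r - s * f ^ η) * f) + s ^ 2 * (f ^ M - C (f.coeff 0 ^ M)) := by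
      rw [hη, pow_succ f, mul_comm 2, pow_mul]; ring
    rw [key]
    exact dvd_add (h.mul_right _) (hfM.mul_left _)
  have hlt : (r ^ 2 * f - C (f.coeff 0 ^ M) * s ^ 2).degree < M := by
    refine (degree_sub_le _ _).trans_lt (max_lt (degree_sq_mul_lt hr le_rfl hA) ?_)
    rw [mul_comm]
    exact degree_sq_mul_lt hs (by simp) hA
  exact eq_zero_of_sq_mul_eq_C_mul_sq hf hdeg (pow_ne_zero M hf0)
    (sub_eq_zero.1 (eq_zero_of_dvd_of_degree_lt hdvd (by simpa using hlt)))

lemma eq_zero_of_sum_mul_X_pow_eq_zero {R : Type*} [CommRing R] [IsDomain R] {J M : ℕ}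
    {u : Fin J → R[X]} (hu : ∀ j, X ^ M ∣ u j → u j = 0)
    (h : ∑ j, u j * X ^ (M * (j : ℕ)) = 0) (j : Fin J) : u j = 0 := by
  induction j using WellFoundedLT.induction with
  | ind j ih =>
    apply hu
    have hj : u j * X ^ (M * (j : ℕ)) = -∑ i ∈ univ.erase j, u i * X ^ (M * (i : ℕ)) := by
      rw [eq_neg_iff_add_eq_zero, ← h]
      exact Finset.add_sum_erase univ (fun i => u i * X ^ (M * (i : ℕ))) (mem_univ j)
    have hdvd : X ^ M * X ^ (M * (j : ℕ)) ∣ u j * X ^ (M * (j : ℕ)) := by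
      rw [hj, dvd_neg, ← pow_add]
      refine Finset.dvd_sum fun i hi => ?_
      rcases lt_or_gt_of_ne (Finset.ne_of_mem_erase hi) with hlt | hgt
      · simp [ih i hlt]
      · refine (pow_dvd_pow _ ?_).mul_left _
        linarith [Nat.mul_le_mul_left M (Nat.succ_le_of_lt (show (j : ℕ) < i from hgt))]
    exact (mul_dvd_mul_iff_right (pow_ne_zero _ X_ne_zero)).1 hdvd

lemma eval_map_iterateFrobeniusEquiv_symm_pow (p : ℕ) [Fact p.Prime] [CharP K p] [PerfectRing K p]
    (b : ℕ) (r : K[X]) (x : K) :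
    (r.map ((iterateFrobeniusEquiv K p b).symm : K →+* K)).eval x ^ p ^ b
      = (expand K (p ^ b) r).eval x := by
  have hid : (iterateFrobenius K p b).comp ((iterateFrobeniusEquiv K p b).symm : K →+* K)
      = RingHom.id K :=
    RingHom.ext fun y => (iterateFrobeniusEquiv K p b).apply_symm_apply y
  rw [← eval_pow, ← map_iterateFrobenius_expand p, ← map_expand, Polynomial.map_map, hid,
    Polynomial.map_id]

/-- The auxiliary polynomial of Stepanov's method for the curve `y ^ 2 = f`: a combination of the
monomials `X ^ (M * j)` and `f ^ η * X ^ (M * j)` with coefficients `r` and `s` of low degree. -/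
noncomputable def stepanovPolynomial (f : K[X]) (η M : ℕ) {J : ℕ} (r s : Fin J → K[X]) : K[X] :=
  ∑ j, (r j + s j * f ^ η) * X ^ (M * (j : ℕ))

lemma stepanovPolynomial_ne_zero {p : ℕ} [Fact p.Prime] [CharP K p] {c η A J : ℕ}
    (hη : p ^ c = 2 * η + 1) {f : K[X]} (hf : Squarefree f) (hdeg : 0 < f.natDegree)
    (hf0 : f.coeff 0 ≠ 0) (hA : 2 * A + f.natDegree ≤ p ^ c) {r s : Fin J → K[X]}
    (hr : ∀ j, (r j).degree < A) (hs : ∀ j, (s j).degree < A) (hrs : ∃ j, r j ≠ 0 ∨ s j ≠ 0) :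
    stepanovPolynomial f η (p ^ c) r s ≠ 0 := by
  have hzero (j) (h : X ^ p ^ c ∣ r j + s j * f ^ η) : r j = 0 ∧ s j = 0 :=
    eq_zero_of_X_pow_dvd_add_mul_pow hη hf hdeg hf0 hA (hr j) (hs j) h
  intro h
  obtain ⟨j, hj⟩ := hrs
  have huj : r j + s j * f ^ η = 0 := eq_zero_of_sum_mul_X_pow_eq_zero
    (u := fun j => r j + s j * f ^ η) (fun i hi => by simp [hzero i hi]) h j
  have := hzero j (huj ▸ dvd_zero _)
  tauto

lemma natDegree_stepanovPolynomial_le {f : K[X]} {η M A J : ℕ} {r s : Fin J → K[X]}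
    (hr : ∀ j, (r j).degree < A) (hs : ∀ j, (s j).degree < A) :
    (stepanovPolynomial f η M r s).natDegree ≤ A + η * f.natDegree + M * J := by
  refine natDegree_sum_le_of_forall_le _ _ fun j _ => ?_
  have hr' : (r j).natDegree ≤ A + η * f.natDegree :=
    (natDegree_le_of_degree_le (hr j).le).trans (Nat.le_add_right _ _)
  have hs' : (s j * f ^ η).natDegree ≤ A + η * f.natDegree :=
    natDegree_mul_le.trans (add_le_add (natDegree_le_of_degree_le (hs j).le) natDegree_pow_le)
  refine natDegree_mul_le.trans (add_le_add (natDegree_add_le_of_degree_le hr' hs') ?_)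
  rw [natDegree_X_pow]
  exact Nat.mul_le_mul_left _ j.2.le

lemma eval_stepanovPolynomial_pow [Fintype K] {p : ℕ} [Fact p.Prime] [CharP K p]
    {b η M J : ℕ} (hK : Fintype.card K = p ^ b * M) (f : K[X]) (r s : Fin J → K[X]) (x : K) :
    (stepanovPolynomial f η M
        (fun j => (r j).map ((iterateFrobeniusEquiv K p b).symm : K →+* K))
        (fun j => (s j).map ((iterateFrobeniusEquiv K p b).symm : K →+* K))).eval x ^ p ^ b
      = ∑ j, ((expand K (p ^ b) (r j)).eval x
          + (expand K (p ^ b) (s j)).eval x * f.eval x ^ (η * p ^ b)) * x ^ (j : ℕ) := by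
  rw [stepanovPolynomial, eval_finsetSum, sum_pow_char_pow]
  refine Finset.sum_congr rfl fun j _ => ?_
  have hx : x ^ (M * (j : ℕ) * p ^ b) = x ^ (j : ℕ) := by
    rw [show M * (j : ℕ) * p ^ b = (p ^ b * M) * j by ring, pow_mul, ← hK, FiniteField.pow_card]
  simp only [eval_mul, eval_add, eval_pow, eval_X]
  rw [mul_pow, add_pow_char_pow, mul_pow, eval_map_iterateFrobeniusEquiv_symm_pow,
    eval_map_iterateFrobeniusEquiv_symm_pow, ← pow_mul, ← pow_mul, hx]

lemma isRoot_stepanovPolynomial [Fintype K] {p : ℕ} [Fact p.Prime] [CharP K p] {b c θ η J : ℕ}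
    (hK : Fintype.card K = p ^ b * p ^ c) (hθ : p ^ b = 2 * θ + 1) (hη : p ^ c = 2 * η + 1)
    {f : K[X]} {r s : Fin J → K[X]} {ε : K} (hε : ε ≠ 0)
    (h : ∑ j, expand K (p ^ b) (r j) * (f ^ θ * X ^ (j : ℕ))
      + ∑ j, expand K (p ^ b) (s j) * (C ε * X ^ (j : ℕ)) = 0)
    {x : K} (hx : f.eval x ^ (Fintype.card K / 2) = ε) :
    (stepanovPolynomial f η (p ^ c)
      (fun j => (r j).map ((iterateFrobeniusEquiv K p b).symm : K →+* K))
      (fun j => (s j).map ((iterateFrobeniusEquiv K p b).symm : K →+* K))).IsRoot x := by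
  have hhalf : Fintype.card K / 2 = θ + η * p ^ b := by
    have : p ^ b * p ^ c = 2 * (θ + η * p ^ b) + 1 := by rw [hη, hθ]; ring
    omega
  have hfx : f.eval x ≠ 0 := by
    intro h0
    have : 0 < Fintype.card K / 2 := Nat.div_pos Fintype.one_lt_card two_pos
    exact hε (by rw [← hx, h0, zero_pow this.ne'])
  have hzero := congrArg (Polynomial.eval x) h
  rw [← Finset.sum_add_distrib, eval_finsetSum, eval_zero] at hzero
  refine eq_zero_of_pow_eq_zero (n := p ^ b)
    ((mul_eq_zero.1 ?_).resolve_left (pow_ne_zero θ hfx))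
  rw [eval_stepanovPolynomial_pow hK, Finset.mul_sum, ← hzero]
  refine Finset.sum_congr rfl fun j _ => ?_
  simp only [eval_add, eval_mul, eval_pow, eval_X, eval_C]
  rw [← hx, hhalf, pow_add]
  ring

lemma exists_isRoot_of_eval_pow_eq [Fintype K] {p : ℕ} [Fact p.Prime] [CharP K p]
    {b c θ η A J : ℕ} (hK : Fintype.card K = p ^ b * p ^ c) (hθ : p ^ b = 2 * θ + 1)
    (hη : p ^ c = 2 * η + 1) {f : K[X]} (hf : Squarefree f) (hdeg : 0 < f.natDegree)
    (hf0 : f.coeff 0 ≠ 0) (hA : 2 * A + f.natDegree ≤ p ^ c)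
    (hJ : θ * f.natDegree + p ^ b * A + J < 2 * (J * A)) {ε : K} (hε : ε ≠ 0) :
    ∃ R : K[X], R ≠ 0 ∧ R.natDegree ≤ A + η * f.natDegree + p ^ c * J ∧
      ∀ x, f.eval x ^ (Fintype.card K / 2) = ε → R.IsRoot x := by
  set g : Fin J ⊕ Fin J → K[X] :=
    Sum.elim (fun j => f ^ θ * X ^ (j : ℕ)) (fun j => C ε * X ^ (j : ℕ))
  have hgdeg (i) : (g i).natDegree + p ^ b * A < θ * f.natDegree + p ^ b * A + J := by
    rcases i with j | j
    · have : (g (.inl j)).natDegree ≤ θ * f.natDegree + j :=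
        natDegree_mul_le.trans (add_le_add natDegree_pow_le (natDegree_X_pow_le _))
      linarith [j.2]
    · have : (g (.inr j)).natDegree ≤ j := natDegree_C_mul_X_pow_le _ _
      linarith [j.2, Nat.zero_le (θ * f.natDegree)]
  obtain ⟨u, hu0, hudeg, hu⟩ := exists_sum_expand_mul_eq_zero g hgdeg (by simp; linarith)
  set σ : K →+* K := ((iterateFrobeniusEquiv K p b).symm : K →+* K)
  have hdeg_map (i) : ((u i).map σ).degree < A := by rw [degree_map]; exact hudeg i
  refine ⟨stepanovPolynomial f η (p ^ c) (fun j => (u (.inl j)).map σ)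
    (fun j => (u (.inr j)).map σ), stepanovPolynomial_ne_zero hη hf hdeg hf0 hA
      (fun _ => hdeg_map _) (fun _ => hdeg_map _) ?_,
    natDegree_stepanovPolynomial_le (fun _ => hdeg_map _) (fun _ => hdeg_map _), fun x hx => ?_⟩
  · obtain ⟨i, hi⟩ := Function.ne_iff.1 hu0
    have : (u i).map σ ≠ 0 := (Polynomial.map_ne_zero_iff σ.injective).2 hi
    rcases i with j | j
    exacts [⟨j, .inl this⟩, ⟨j, .inr this⟩]
  · rw [Fintype.sum_sum_type] at hu
    exact isRoot_stepanovPolynomial hK hθ hη hε hu hx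

lemma two_mul_card_eval_pow_eq_le [Fintype K] [DecidableEq K] {p : ℕ} [Fact p.Prime] [CharP K p]
    (hp : Odd p) {b c : ℕ} (hK : Fintype.card K = p ^ b * p ^ c) (hbc : b ≤ c) {f : K[X]}
    (hf : Squarefree f) (hdeg : 0 < f.natDegree) (hf0 : f.coeff 0 ≠ 0)
    (hM : 4 * f.natDegree + 8 < p ^ c) {ε : K} (hε : ε ≠ 0) :
    2 * #{x : K | f.eval x ^ (Fintype.card K / 2) = ε}
      ≤ Fintype.card K + p ^ c * (3 * f.natDegree + 4) := by
  set D := f.natDegree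
  have hle : p ^ b ≤ p ^ c := Nat.pow_le_pow_right (Fact.out : p.Prime).pos hbc
  obtain ⟨θ, hθ⟩ := hp.pow (n := b)
  obtain ⟨η, hη⟩ := hp.pow (n := c)
  set M := p ^ c
  set A := (M - D) / 2
  set J := θ + D + 2 with hJ
  have hcount : θ * D + p ^ b * A + J < 2 * (J * A) := by
    have : θ * (D + 1) ≤ (2 * A) * (D + 1) := Nat.mul_le_mul_right _ (by omega)
    have : M ≤ 4 * A := by omega
    rw [hJ, hθ]
    nlinarith
  obtain ⟨R, hR0, (hRdeg : R.natDegree ≤ A + η * D + M * J), hroot⟩ :=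
    exists_isRoot_of_eval_pow_eq hK hθ hη hf hdeg hf0 (by omega) hcount hε
  have hcard : #{x : K | f.eval x ^ (Fintype.card K / 2) = ε} ≤ R.natDegree :=
    card_le_degree_of_subset_roots fun x hx => (mem_roots hR0).2 (hroot x (by simpa using hx))
  have hbound : 2 * (A + η * D + M * J) ≤ Fintype.card K + M * (3 * D + 4) := by
    have : 2 * A ≤ M := by omega
    have : 2 * (η * D) ≤ M * D := by nlinarith
    rw [hK, hJ, hθ]
    nlinarith
  omega

end Stepanov

section QuadraticCharacter

open Polynomial

variable {K : Type*} [Field K] [Fintype K] [DecidableEq K]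

lemma two_mul_ite_quadraticChar_eq {ε : ℤ} (hε : ε = 1 ∨ ε = -1) (a : K) :
    2 * (if quadraticChar K a = ε then 1 else 0)
      = 1 + ε * quadraticChar K a - if a = 0 then 1 else 0 := by
  rcases eq_or_ne a 0 with rfl | ha
  · rcases hε with rfl | rfl <;> simp
  · rcases hε with rfl | rfl <;> rcases quadraticChar_dichotomy ha with h | h <;> simp [h, ha]

lemma abs_quadraticChar_le_one (a : K) : |quadraticChar K a| ≤ 1 := by
  rcases eq_or_ne a 0 with rfl | ha
  · simp
  · rcases quadraticChar_dichotomy ha with h | h <;> simp [h]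

lemma abs_sum_quadraticChar_le_of_card_le {X : Type*} [Fintype X] (f : X → K) {E : ℕ}
    (h : ∀ ε : ℤ, ε = 1 ∨ ε = -1 →
      2 * #{x | quadraticChar K (f x) = ε} ≤ Fintype.card X + E) :
    |∑ x, quadraticChar K (f x)| ≤ E + #{x | f x = 0} := by
  have hcount (ε : ℤ) (hε : ε = 1 ∨ ε = -1) :
      ε * ∑ x, quadraticChar K (f x) ≤ E + #{x | f x = 0} := by
    have hsum := Finset.sum_congr rfl fun x (_ : x ∈ univ) => two_mul_ite_quadraticChar_eq hε (f x)
    rw [← Finset.mul_sum, Finset.sum_sub_distrib, Finset.sum_add_distrib, ← Finset.mul_sum] at hsum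
    simp only [Finset.sum_boole, sum_const, card_univ, nsmul_eq_mul, mul_one] at hsum
    have := h ε hε
    zify at this
    linarith
  exact abs_le'.2 ⟨by simpa using hcount 1 (.inl rfl), by simpa using hcount (-1) (.inr rfl)⟩

lemma abs_sum_quadraticChar_eval_le_of_coeff_zero_ne {p : ℕ} [Fact p.Prime] [CharP K p]
    (hp : Odd p) {b c : ℕ} (hK : Fintype.card K = p ^ b * p ^ c) (hbc : b ≤ c) {f : K[X]}
    (hf : Squarefree f) (hdeg : 0 < f.natDegree) (hf0 : f.coeff 0 ≠ 0)
    (hM : 4 * f.natDegree + 8 < p ^ c) :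
    |∑ x : K, quadraticChar K (f.eval x)| ≤ p ^ c * (3 * f.natDegree + 4) + f.natDegree := by
  have hchar : ringChar K ≠ 2 := by
    rw [ringChar.eq K p]
    rintro rfl
    exact absurd hp (by decide)
  have hcard (ε : ℤ) (hε : ε = 1 ∨ ε = -1) : 2 * #{x : K | quadraticChar K (f.eval x) = ε}
      ≤ Fintype.card K + p ^ c * (3 * f.natDegree + 4) := by
    have hε0 : (ε : K) ≠ 0 := by rcases hε with rfl | rfl <;> simp
    refine le_trans ?_ (two_mul_card_eval_pow_eq_le hp hK hbc hf hdeg hf0 hM hε0)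
    gcongr 2 * #?_
    intro x hx
    simp only [mem_filter, mem_univ, true_and] at hx ⊢
    rw [← quadraticChar_eq_pow_of_char_ne_two' hchar, hx]
  have hzeros : #{x : K | f.eval x = 0} ≤ f.natDegree :=
    card_le_degree_of_subset_roots fun x hx =>
      (mem_roots (ne_zero_of_natDegree_gt hdeg)).2 (by simpa using hx)
  have := abs_sum_quadraticChar_le_of_card_le (fun x => f.eval x) hcard
  zify at hzeros
  push_cast at this
  linarith

lemma separable_comp_of_derivative_eq_C {k : Type*} [Field k] {f g : k[X]} (hf : f.Separable)
    {u : k} (hu : u ≠ 0) (hg : derivative g = C u) : (f.comp g).Separable := by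
  rw [separable_def, derivative_comp, hg]
  have h := IsCoprime.map hf (compRingHom g)
  simp only [coe_compRingHom_apply] at h
  exact (isCoprime_mul_unit_left_right (isUnit_C.2 hu.isUnit) _ _).2 h

lemma abs_sum_quadraticChar_eval_le_of_natDegree_lt {p : ℕ} [Fact p.Prime] [CharP K p]
    (hp : Odd p) {b c : ℕ} (hK : Fintype.card K = p ^ b * p ^ c) (hbc : b ≤ c) {f : K[X]}
    (hf : f.Separable) (hdeg : 0 < f.natDegree) (hM : 4 * f.natDegree + 8 < p ^ c) :
    |∑ x : K, quadraticChar K (f.eval x)| ≤ (4 * f.natDegree + 8) * p ^ c := by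
  have hlt : f.natDegree < Fintype.card K := by
    rw [hK]
    have : 1 ≤ p ^ b := Nat.one_le_pow _ _ (Fact.out : p.Prime).pos
    nlinarith
  obtain ⟨z, hz⟩ : ∃ z, f.eval z ≠ 0 :=
    exists_eval_ne_zero_of_natDegree_lt_card f (ne_zero_of_natDegree_gt hdeg) (by simpa using hlt)
  have hnd : (f.comp (X + C z)).natDegree = f.natDegree := by rw [natDegree_comp]; simp
  have key := abs_sum_quadraticChar_eval_le_of_coeff_zero_ne (f := f.comp (X + C z)) hp hK hbc
    (separable_comp_of_derivative_eq_C hf one_ne_zero (by simp)).squarefree (by rwa [hnd])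
    (by rw [coeff_zero_eq_eval_zero]; simpa using hz) (by rwa [hnd])
  simp only [hnd, eval_comp, eval_add, eval_X, eval_C] at key
  rw [Fintype.sum_equiv (Equiv.addRight z) _ (fun x => quadraticChar K (f.eval x))
    fun x => by simp] at key
  have : 1 ≤ p ^ c := Nat.one_le_pow _ _ (Fact.out : p.Prime).pos
  zify at this
  nlinarith

/-- The cardinality of `K` has a factor `p ^ c` between `√|K|` and `√p * √|K|`, which is what
Stepanov's method needs. -/
lemma abs_sum_quadraticChar_eval_le (p : ℕ) [CharP K p] (hp : Odd p) {f : K[X]}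
    (hf : f.Separable) (hdeg : 0 < f.natDegree) :
    |((∑ x : K, quadraticChar K (f.eval x) : ℤ) : ℝ)|
      ≤ (4 * f.natDegree + 8) * √p * √(Fintype.card K) := by
  obtain ⟨n, hprime, hn⟩ := FiniteField.card K p
  have : Fact p.Prime := ⟨hprime⟩
  obtain ⟨b, c, hbc, hbcn, hcn⟩ : ∃ b c : ℕ, b ≤ c ∧ b + c = n ∧ 2 * c ≤ n + 1 :=
    ⟨(n : ℕ) / 2, n - (n : ℕ) / 2, by omega, by omega, by omega⟩
  have hK : Fintype.card K = p ^ b * p ^ c := by rw [hn, ← pow_add, hbcn]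
  have hpc_le : (p ^ c : ℝ) ≤ √p * √(Fintype.card K) := by
    rw [← Real.sqrt_mul (by positivity), hn]
    refine Real.le_sqrt_of_sq_le ?_
    rw [← pow_mul, Nat.cast_pow, ← pow_succ']
    exact pow_le_pow_right₀ (by exact_mod_cast hprime.one_le) (by omega)
  rw [mul_assoc]
  by_cases hM : 4 * f.natDegree + 8 < p ^ c
  · calc |((∑ x : K, quadraticChar K (f.eval x) : ℤ) : ℝ)|
        ≤ (4 * f.natDegree + 8) * p ^ c := by
          exact_mod_cast abs_sum_quadraticChar_eval_le_of_natDegree_lt hp hK hbc hf hdeg hM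
      _ ≤ _ := by gcongr
  · have htriv : |∑ x : K, quadraticChar K (f.eval x)| ≤ Fintype.card K := by
      refine (Finset.abs_sum_le_sum_abs _ _).trans ?_
      simpa using Finset.sum_le_sum fun x (_ : x ∈ univ) => abs_quadraticChar_le_one (f.eval x)
    calc |((∑ x : K, quadraticChar K (f.eval x) : ℤ) : ℝ)|
        ≤ Fintype.card K := by exact_mod_cast htriv
      _ = p ^ c * p ^ b := by rw [hK]; push_cast; ring
      _ ≤ (4 * f.natDegree + 8) * p ^ c := by
          gcongr
          · exact_mod_cast not_lt.1 hM
          · exact_mod_cast hprime.one_le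
      _ ≤ _ := by gcongr

end QuadraticCharacter

section ArtinSchreier

open Polynomial

variable {F K : Type*} [Field F] [Fintype F] [Field K] [Fintype K] [Algebra F K]

/-- The substitution `t = z ^ q - z + s` runs `|K|` times over `K` and leaves `ψ (tr t) = ψ (tr s)`
independent of `z`. -/
lemma norm_sum_mul_trace_le (h : K → ℂ) {B : ℝ}
    (hB : ∀ s, ‖∑ z, h (z ^ Fintype.card F - z + s)‖ ≤ B) (ψ : AddChar F ℂ) :
    ‖∑ t, h t * ψ (Algebra.trace F K t)‖ ≤ B := by
  set q := Fintype.card F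
  have trace_pow (z : K) : Algebra.trace F K (z ^ q) = Algebra.trace F K z :=
    Algebra.trace_eq_of_algEquiv (FiniteField.frobeniusAlgEquivOfAlgebraic F K) z
  have average : Fintype.card K * ∑ t, h t * ψ (Algebra.trace F K t)
      = ∑ s, (∑ z, h (z ^ q - z + s)) * ψ (Algebra.trace F K s) := by
    calc Fintype.card K * ∑ t, h t * ψ (Algebra.trace F K t)
        = ∑ _z : K, ∑ t, h t * ψ (Algebra.trace F K t) := by simp
      _ = ∑ z, ∑ s, h (z ^ q - z + s) * ψ (Algebra.trace F K s) :=
          Finset.sum_congr rfl fun z _ => (Fintype.sum_equiv (Equiv.addLeft (z ^ q - z)) _ _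
            fun s => by simp [trace_pow]).symm
      _ = _ := by simp only [Finset.sum_mul]; exact Finset.sum_comm
  have hcard : (0 : ℝ) < Fintype.card K := by exact_mod_cast Fintype.card_pos
  refine le_of_mul_le_mul_left ?_ hcard
  calc Fintype.card K * ‖∑ t, h t * ψ (Algebra.trace F K t)‖
      = ‖∑ s, (∑ z, h (z ^ q - z + s)) * ψ (Algebra.trace F K s)‖ := by
        rw [← average, norm_mul, Complex.norm_natCast]
    _ ≤ ∑ _s : K, B := norm_sum_le_of_le _ fun s _ => by
        rw [norm_mul, AddChar.norm_apply, mul_one]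
        exact hB s
    _ = Fintype.card K * B := by simp

lemma norm_sum_quadraticChar_mul_trace_le [DecidableEq K] (p : ℕ) [CharP K p] (hp : Odd p)
    {A : Finset F} (hA : A.Nonempty) (ψ : AddChar F ℂ) :
    ‖∑ t : K, (quadraticChar K (∏ a ∈ A, (algebraMap F K a - t)) : ℂ) * ψ (Algebra.trace F K t)‖
      ≤ (4 * (#A * Fintype.card F : ℕ) + 8) * √p * √(Fintype.card K) := by
  set q := Fintype.card F with hq
  refine norm_sum_mul_trace_le _ (fun s => ?_) ψ
  set f : K[X] := ∏ a ∈ A, (X - C (-algebraMap F K a)) with hf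
  have hfsep : f.Separable := separable_prod_X_sub_C_iff'.2 fun x _ y _ h =>
    (algebraMap F K).injective (neg_injective h)
  set g : K[X] := -(X ^ q - X + C s) with hg
  have hgdeg : g.natDegree = q := by
    rw [hg, natDegree_neg, natDegree_add_C]
    exact FiniteField.X_pow_card_sub_X_natDegree_eq K Fintype.one_lt_card
  have hqK : (q : K) = 0 := by
    rw [← map_natCast (algebraMap F K), hq, FiniteField.cast_card_eq_zero, map_zero]
  have hfg : (f.comp g).natDegree = #A * q := by
    rw [natDegree_comp, hgdeg, hf, natDegree_finsetProd_X_sub_C_eq_card]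
  have key := abs_sum_quadraticChar_eval_le p hp
    (separable_comp_of_derivative_eq_C (g := g) hfsep one_ne_zero
      (by simp [hg, derivative_X_pow, hqK]))
    (by rw [hfg]; exact Nat.mul_pos hA.card_pos Fintype.card_pos)
  rw [hfg] at key
  have heval (z : K) : (f.comp g).eval z = ∏ a ∈ A, (algebraMap F K a - (z ^ q - z + s)) := by
    rw [hf, eval_comp, eval_prod]
    exact Finset.prod_congr rfl fun a _ => by simp [hg]; ring
  simp only [heval] at key
  rwa [← Int.cast_sum, Complex.norm_intCast]

end ArtinSchreier

section Norms

open Polynomial IntermediateField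

lemma norm_algebraMap_sub_gen {R S : Type*} [CommRing R] [Nontrivial R] [Ring S] [Algebra R S]
    (pb : PowerBasis R S) (a : R) :
    Algebra.norm R (algebraMap R S a - pb.gen) = (minpoly R pb.gen).eval a := by
  rw [← charpoly_leftMulMatrix, Matrix.eval_charpoly, Algebra.norm_eq_matrix_det pb.basis, map_sub]
  congr 2
  exact AlgHomClass.commutes (Algebra.leftMulMatrix pb.basis) a

variable {k K : Type*} [Field k] [Field K] [Algebra k K]

lemma finrank_adjoin_mul_natDegree_minpoly [FiniteDimensional k K] (t : K) :
    Module.finrank k⟮t⟯ K * (minpoly k t).natDegree = Module.finrank k K := by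
  rw [← adjoin.finrank (Algebra.IsIntegral.isIntegral t), mul_comm, Module.finrank_mul_finrank]

lemma norm_algebraMap_sub_eq_eval_minpoly_pow [FiniteDimensional k K] (t : K) (a : k) :
    Algebra.norm k (algebraMap k K a - t) = (minpoly k t).eval a ^ Module.finrank k⟮t⟯ K := by
  have ht : algebraMap k K a - t
      = algebraMap k⟮t⟯ K (algebraMap k k⟮t⟯ a - AdjoinSimple.gen k t) := by simp
  have hgen := norm_algebraMap_sub_gen
    (adjoin.powerBasis (K := k) (Algebra.IsIntegral.isIntegral (R := k) t)) a
  rw [adjoin.powerBasis_gen, minpoly_gen] at hgen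
  rw [ht, ← Algebra.norm_norm (S := k⟮t⟯), Algebra.norm_algebraMap, map_pow, hgen]

lemma quadraticChar_norm [Fintype k] [DecidableEq k] [Fintype K] [DecidableEq K]
    (hk : ringChar k ≠ 2) (y : K) : quadraticChar k (Algebra.norm k y) = quadraticChar K y := by
  have hK : ringChar K ≠ 2 := by rwa [← Algebra.ringChar_eq k K]
  refine (quadraticChar_isQuadratic k).eq_of_eq_coe (quadraticChar_isQuadratic K) hK ?_
  have hexp : (Fintype.card K - 1) / (Fintype.card k - 1) * (Fintype.card k / 2)
      = Fintype.card K / 2 := by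
    have hk2 := FiniteField.odd_card_of_char_ne_two hk
    have hk1 : 1 < Fintype.card k := Fintype.one_lt_card
    have hK2 := FiniteField.odd_card_of_char_ne_two hK
    obtain ⟨d, hd⟩ : Fintype.card k - 1 ∣ Fintype.card K - 1 := by
      rw [Module.card_eq_pow_finrank (K := k) (V := K)]
      simpa using Nat.sub_dvd_pow_sub_pow (Fintype.card k) 1 (Module.finrank k K)
    rw [hd, Nat.mul_div_cancel_left _ (by omega)]
    obtain ⟨m, hm⟩ : ∃ m, Fintype.card k = 2 * m + 1 := ⟨Fintype.card k / 2, by omega⟩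
    rw [hm, Nat.add_sub_cancel, mul_assoc] at hd
    rw [show Fintype.card k / 2 = m by omega, mul_comm]
    omega
  calc ((quadraticChar k (Algebra.norm k y) : ℤ) : K)
      = algebraMap k K (quadraticChar k (Algebra.norm k y) : ℤ) := (map_intCast _ _).symm
    _ = (y ^ ((Fintype.card K - 1) / (Fintype.card k - 1))) ^ (Fintype.card k / 2) := by
        rw [quadraticChar_eq_pow_of_char_ne_two' hk, map_pow, FiniteField.algebraMap_norm_eq_pow,
          Nat.card_eq_fintype_card, Nat.card_eq_fintype_card]
    _ = (quadraticChar K y : ℤ) := by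
        rw [← pow_mul, hexp, quadraticChar_eq_pow_of_char_ne_two' hK]

end Norms

section EulerProduct

open Polynomial UniqueFactorizationMonoid

variable {F : Type*} [Field F]

lemma pow_dvd_iff_le_count_normalizedFactors [DecidableEq F] {P g : F[X]} (hP : P.Monic)
    (hirr : Irreducible P) (hg : g ≠ 0) (i : ℕ) :
    P ^ i ∣ g ↔ i ≤ (normalizedFactors g).count P := by
  have h := emultiplicity_eq_count_normalizedFactors hirr hg
  rw [hP.normalize_eq_self] at h
  rw [pow_dvd_iff_le_emultiplicity, h, Nat.cast_le]

lemma sum_count_normalizedFactors_mul_natDegree [DecidableEq F] {g : F[X]} (hg : g.Monic) :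
    ∑ P ∈ (normalizedFactors g).toFinset, (normalizedFactors g).count P * P.natDegree
      = g.natDegree := by
  have hprod : (normalizedFactors g).prod = g := by
    rw [prod_normalizedFactors_eq hg.ne_zero, hg.normalize_eq_self]
  conv_rhs => rw [← hprod, natDegree_multiset_prod_of_monic _ fun P hP =>
    ((Polynomial.mem_normalizedFactors_iff hg.ne_zero).1 hP).2.1, Finset.sum_multiset_map_count]
  simp only [smul_eq_mul]

lemma map_pow_of_map_mul_of_monic {R : Type*} [CommMonoid R] {Λ : F[X] → R} (h1 : Λ 1 = 1)
    (hmul : ∀ f g : F[X], f.Monic → g.Monic → Λ (f * g) = Λ f * Λ g) {P : F[X]} (hP : P.Monic)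
    (i : ℕ) : Λ (P ^ i) = Λ P ^ i := by
  induction i with
  | zero => simpa using h1
  | succ i ih => rw [pow_succ, hmul _ _ (hP.pow i) hP, ih, pow_succ]

variable (F) [Finite F]

lemma finite_monic_natDegree_eq (d : ℕ) : {g : F[X] | g.Monic ∧ g.natDegree = d}.Finite := by
  have : Finite (degreeLT F (d + 1)) := Finite.of_equiv _ (degreeLTEquiv F (d + 1)).symm.toEquiv
  refine (Set.toFinite (degreeLT F (d + 1) : Set F[X])).subset fun g hg => ?_
  rw [SetLike.mem_coe, mem_degreeLT, ← Order.succ_eq_add_one, ← hg.2]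
  exact degree_le_natDegree.trans_lt (by exact_mod_cast Nat.lt_succ_self _)

/-- The monic polynomials of degree `d` over a finite field: the effective divisors of degree `d`
on the affine line. -/
noncomputable def monics (d : ℕ) : Finset F[X] :=
  (finite_monic_natDegree_eq F d).toFinset

open scoped Classical in
/-- The prime powers of degree `n` in `F[X]`. The power `P ^ i` is recorded as the pair `(P, i)`,
with `P` monic irreducible and `i` positive. -/
noncomputable def primePowers (n : ℕ) : Finset (F[X] × ℕ) :=
  {x ∈ (range (n + 1)).biUnion (monics F) ×ˢ Icc 1 n | Irreducible x.1 ∧ x.2 * x.1.natDegree = n}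

variable {F}

lemma mem_monics {d : ℕ} {g : F[X]} : g ∈ monics F d ↔ g.Monic ∧ g.natDegree = d := by
  simp [monics]

lemma monics_zero : monics F 0 = {1} := by
  ext g
  rw [mem_monics, mem_singleton]
  refine ⟨fun h => h.1.natDegree_eq_zero.1 h.2, ?_⟩
  rintro rfl
  exact ⟨monic_one, natDegree_one⟩

lemma sum_monics_one [Fintype F] {M : Type*} [AddCommMonoid M] (f : F[X] → M) :
    ∑ g ∈ monics F 1, f g = ∑ t, f (X - C t) := by
  refine (Finset.sum_nbij (fun t => X - C t) (fun t _ => ?_) (fun s _ t _ h => ?_)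
    (fun g hg => ?_) fun _ _ => rfl).symm
  · exact mem_monics.2 ⟨monic_X_sub_C t, natDegree_X_sub_C t⟩
  · simpa using h
  · obtain ⟨hmonic, hdeg⟩ := mem_monics.1 hg
    exact ⟨-g.coeff 0, by simp, by simpa using (hmonic.eq_X_add_C hdeg).symm⟩

lemma mem_primePowers {n : ℕ} {x : F[X] × ℕ} : x ∈ primePowers F n ↔
    x.1.Monic ∧ Irreducible x.1 ∧ x.2 ≠ 0 ∧ x.2 * x.1.natDegree = n := by
  simp only [primePowers, mem_filter, mem_product, mem_biUnion, mem_range, mem_monics, mem_Icc]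
  constructor
  · rintro ⟨⟨⟨_, _, hmonic, _⟩, hpos, _⟩, hirr, hdeg⟩
    exact ⟨hmonic, hirr, by omega, hdeg⟩
  · rintro ⟨hmonic, hirr, hpos, rfl⟩
    have hle := Nat.le_mul_of_pos_left x.1.natDegree (Nat.pos_of_ne_zero hpos)
    exact ⟨⟨⟨_, by omega, hmonic, rfl⟩, by omega, Nat.le_mul_of_pos_right _ hirr.natDegree_pos⟩,
      hirr, rfl⟩

open scoped Classical in
lemma sum_natDegree_primePowers_dvd {d : ℕ} {g : F[X]} (hg : g ∈ monics F d) :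
    ∑ j ∈ Icc 1 d, ∑ x ∈ primePowers F j with x.1 ^ x.2 ∣ g, x.1.natDegree = d := by
  obtain ⟨hmonic, hdeg⟩ := mem_monics.1 hg
  have hg0 := hmonic.ne_zero
  have hcount : d = ∑ P ∈ (normalizedFactors g).toFinset,
      ∑ _i ∈ Icc 1 ((normalizedFactors g).count P), P.natDegree := by
    simp [← hdeg, ← sum_count_normalizedFactors_mul_natDegree hmonic]
  conv_rhs => rw [hcount]
  rw [Finset.sum_sigma', Finset.sum_sigma']
  refine Finset.sum_nbij' (fun y => ⟨y.2.1, y.2.2⟩) (fun y => ⟨y.2 * y.1.natDegree, y.1, y.2⟩)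
    ?_ ?_ ?_ (fun _ _ => rfl) fun _ _ => rfl
  · rintro ⟨j, P, i⟩ hx
    simp only [mem_sigma, mem_filter, mem_primePowers] at hx
    obtain ⟨-, ⟨hP, hirr, hi, -⟩, hdvd⟩ := hx
    simp only [mem_sigma, Multiset.mem_toFinset, Polynomial.mem_normalizedFactors_iff hg0, mem_Icc,
      ← pow_dvd_iff_le_count_normalizedFactors hP hirr hg0]
    exact ⟨⟨hirr, hP, (dvd_pow_self P hi).trans hdvd⟩, Nat.one_le_iff_ne_zero.2 hi, hdvd⟩
  · rintro ⟨P, i⟩ hx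
    simp only [mem_sigma, Multiset.mem_toFinset, Polynomial.mem_normalizedFactors_iff hg0,
      mem_Icc] at hx
    obtain ⟨⟨hirr, hP, -⟩, hi, hle⟩ := hx
    have hdvd := (pow_dvd_iff_le_count_normalizedFactors hP hirr hg0 i).2 hle
    have hle' := natDegree_le_of_dvd hdvd hg0
    rw [natDegree_pow, hdeg] at hle'
    simp only [mem_sigma, mem_Icc, mem_filter, mem_primePowers]
    exact ⟨⟨Nat.mul_pos hi hirr.natDegree_pos, hle'⟩, ⟨hP, hirr, by omega, trivial⟩, hdvd⟩
  · rintro ⟨j, P, i⟩ hx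
    simp only [mem_sigma, mem_filter, mem_primePowers] at hx
    rw [hx.2.1.2.2.2]

open scoped Classical in
lemma sum_monics_filter_dvd {R : Type*} [CommSemiring R] {Λ : F[X] → R}
    (hmul : ∀ f g : F[X], f.Monic → g.Monic → Λ (f * g) = Λ f * Λ g) {Q : F[X]} (hQ : Q.Monic)
    {d : ℕ} (hd : Q.natDegree ≤ d) :
    ∑ g ∈ monics F d with Q ∣ g, Λ g = Λ Q * ∑ g ∈ monics F (d - Q.natDegree), Λ g := by
  rw [Finset.mul_sum]
  refine (Finset.sum_nbij (fun h => Q * h) (fun h hh => ?_)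
    (fun a _ b _ hab => mul_left_cancel₀ hQ.ne_zero hab) (fun g hg => ?_) fun h hh => ?_).symm
  · rw [mem_monics] at hh
    rw [mem_filter, mem_monics, hQ.natDegree_mul hh.1, hh.2]
    exact ⟨⟨hQ.mul hh.1, by omega⟩, dvd_mul_right _ _⟩
  · rw [mem_coe, mem_filter, mem_monics] at hg
    obtain ⟨⟨hmonic, hdeg⟩, h, rfl⟩ := hg
    have hh := hQ.of_mul_monic_left hmonic
    rw [hQ.natDegree_mul hh] at hdeg
    exact ⟨h, mem_coe.2 (mem_monics.2 ⟨hh, by omega⟩), rfl⟩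
  · exact (hmul _ _ hQ (mem_monics.1 hh).1).symm

/-- Comparing coefficients in `T L' / L = ∑ₙ Sₙ Tⁿ`, where `L = ∏ (1 - Λ(P) T ^ deg P)⁻¹` over the
monic irreducible `P`. -/
lemma natCast_mul_sum_monics_eq {R : Type*} [CommSemiring R] {Λ : F[X] → R} (h1 : Λ 1 = 1)
    (hmul : ∀ f g : F[X], f.Monic → g.Monic → Λ (f * g) = Λ f * Λ g) (d : ℕ) :
    (d : R) * ∑ g ∈ monics F d, Λ g = ∑ j ∈ Icc 1 d,
      (∑ x ∈ primePowers F j, (x.1.natDegree : R) * Λ x.1 ^ x.2) * ∑ g ∈ monics F (d - j), Λ g := by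
  classical
  calc (d : R) * ∑ g ∈ monics F d, Λ g
      = ∑ g ∈ monics F d, ∑ j ∈ Icc 1 d, ∑ x ∈ primePowers F j,
          if x.1 ^ x.2 ∣ g then (x.1.natDegree : R) * Λ g else 0 := by
        rw [Finset.mul_sum]
        refine Finset.sum_congr rfl fun g hg => ?_
        conv_lhs => rw [← sum_natDegree_primePowers_dvd hg]
        simp only [Nat.cast_sum, Finset.sum_mul, Finset.sum_filter, Nat.cast_ite, Nat.cast_zero,
          ite_mul, zero_mul]
    _ = ∑ j ∈ Icc 1 d, ∑ x ∈ primePowers F j,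
          (x.1.natDegree : R) * ∑ g ∈ monics F d with x.1 ^ x.2 ∣ g, Λ g := by
        rw [Finset.sum_comm]
        refine Finset.sum_congr rfl fun j _ => ?_
        rw [Finset.sum_comm]
        simp only [Finset.mul_sum, Finset.sum_filter, mul_ite, mul_zero]
    _ = _ := Finset.sum_congr rfl fun j hj => by
        rw [Finset.sum_mul]
        refine Finset.sum_congr rfl fun x hx => ?_
        obtain ⟨hP, -, -, hdeg⟩ := mem_primePowers.1 hx
        have hpow : (x.1 ^ x.2).natDegree = j := by rw [natDegree_pow, hdeg]
        rw [sum_monics_filter_dvd hmul (hP.pow _) (hpow.trans_le (mem_Icc.1 hj).2), hpow,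
          map_pow_of_map_mul_of_monic h1 hmul hP, mul_assoc]

end EulerProduct

section LFunction

open Polynomial IntermediateField

lemma card_filter_minpoly_eq {k K : Type*} [Field k] [Finite k] [Field K] [Fintype K]
    [Algebra k K] [DecidableEq k[X]] {P : k[X]} (hP : P.Monic) (hirr : Irreducible P)
    (hdvd : P.natDegree ∣ Module.finrank k K) : #{t : K | minpoly k t = P} = P.natDegree := by
  classical
  have hroots : ({t : K | minpoly k t = P} : Finset K) = (P.rootSet K).toFinset := by
    ext t
    simp only [mem_filter, mem_univ, true_and, Set.mem_toFinset, mem_rootSet]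
    refine ⟨?_, fun ht => (minpoly.eq_of_irreducible_of_monic hirr ht.2 hP).symm⟩
    rintro rfl
    exact ⟨hP.ne_zero, minpoly.aeval k t⟩
  rw [hirr.natDegree_dvd_iff_dvd_X_pow_card_pow_sub_X, ← Module.natCard_eq_pow_finrank] at hdvd
  rw [hroots, Set.toFinset_card]
  refine card_rootSet_eq_natDegree (PerfectField.separable_of_irreducible hirr) ?_
  refine (splits_X_pow_nat_card_sub_X (K := K)).of_dvd
    (FiniteField.X_pow_card_sub_X_ne_zero K Finite.one_lt_card) ?_
  simpa using Polynomial.map_dvd (algebraMap k K) hdvd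

lemma sum_minpoly_eq_sum_primePowers {k K M : Type*} [Field k] [Finite k] [Field K] [Fintype K]
    [Algebra k K] [AddCommMonoid M] (f : k[X] → ℕ → M) :
    ∑ t : K, f (minpoly k t) (Module.finrank k⟮t⟯ K)
      = ∑ x ∈ primePowers k (Module.finrank k K), x.1.natDegree • f x.1 x.2 := by
  classical
  have hmaps : ∀ t ∈ (univ : Finset K),
      (minpoly k t, Module.finrank k⟮t⟯ K) ∈ primePowers k (Module.finrank k K) := fun t _ => by
    have ht : IsIntegral k t := Algebra.IsIntegral.isIntegral t
    exact mem_primePowers.2 ⟨minpoly.monic ht, minpoly.irreducible ht, Module.finrank_pos.ne',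
      finrank_adjoin_mul_natDegree_minpoly t⟩
  rw [← Finset.sum_fiberwise_of_maps_to hmaps]
  refine Finset.sum_congr rfl fun x hx => ?_
  obtain ⟨hmonic, hirr, -, hdeg⟩ := mem_primePowers.1 hx
  have hfiber : ({t : K | (minpoly k t, Module.finrank k⟮t⟯ K) = x} : Finset K)
      = ({t : K | minpoly k t = x.1} : Finset K) := Finset.filter_congr fun t _ => by
    refine ⟨fun h => congrArg Prod.fst h, fun h => Prod.ext h ?_⟩
    have hmul := finrank_adjoin_mul_natDegree_minpoly (k := k) t
    rw [h, ← hdeg] at hmul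
    exact Nat.eq_of_mul_eq_mul_right hirr.natDegree_pos hmul
  rw [← card_filter_minpoly_eq hmonic hirr (Dvd.intro_left _ hdeg), ← hfiber]
  refine Finset.sum_eq_card_nsmul fun t ht => ?_
  rw [← (mem_filter.1 ht).2]

variable {F : Type*} [Field F] [Fintype F]

lemma sum_monics_eq_zero_of_sum_add_C_mul_eq_zero {Λ : F[X] → ℂ} {h : F[X]} {d : ℕ}
    (hh : h.natDegree < d) (hΛ : ∀ g ∈ monics F d, ∑ c, Λ (g + C c * h) = 0) :
    ∑ g ∈ monics F d, Λ g = 0 := by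
  have hmem : ∀ c, ∀ g ∈ monics F d, g + C c * h ∈ monics F d := fun c g hg => by
    rw [mem_monics] at hg ⊢
    have hlt : (C c * h).natDegree < g.natDegree := by
      have := natDegree_C_mul_le c h
      omega
    exact ⟨hg.1.add_of_left (degree_lt_degree hlt),
      by rw [natDegree_add_eq_left_of_natDegree_lt hlt, hg.2]⟩
  have hshift (c : F) : ∑ g ∈ monics F d, Λ (g + C c * h) = ∑ g ∈ monics F d, Λ g :=
    Finset.sum_bij' (fun g _ => g + C c * h) (fun g _ => g + C (-c) * h) (hmem c) (hmem (-c))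
      (fun g _ => by simp) (fun g _ => by simp) fun _ _ => rfl
  have hcard : (Fintype.card F : ℂ) * ∑ g ∈ monics F d, Λ g = 0 := by
    calc (Fintype.card F : ℂ) * ∑ g ∈ monics F d, Λ g
        = ∑ c : F, ∑ g ∈ monics F d, Λ (g + C c * h) := by simp [hshift]
      _ = 0 := by rw [Finset.sum_comm, Finset.sum_eq_zero hΛ]
  exact (mul_eq_zero.1 hcard).resolve_left (Nat.cast_ne_zero.2 Fintype.card_ne_zero)

variable [DecidableEq F]

/-- The completely multiplicative function `g ↦ ∏ χ(g(a)) · ψ(-g₁)` on monic polynomials, where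
`g₁` is the second-highest coefficient of `g`. Its value at `X - t` is the summand
`χ(∏ (a - t)) ψ(t)` of the character sum to be bounded. -/
noncomputable def paleyWeight (A : Finset F) (ψ : AddChar F ℂ) (g : F[X]) : ℂ :=
  (∏ a ∈ A, (quadraticChar F (g.eval a) : ℂ)) * ψ (-g.nextCoeff)

variable (A : Finset F) (ψ : AddChar F ℂ)

lemma paleyWeight_one : paleyWeight A ψ 1 = 1 := by
  have hnext : (1 : F[X]).nextCoeff = 0 := by rw [← C_1, nextCoeff_C_eq_zero]
  simp [paleyWeight, hnext]

lemma paleyWeight_mul {f g : F[X]} (hf : f.Monic) (hg : g.Monic) :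
    paleyWeight A ψ (f * g) = paleyWeight A ψ f * paleyWeight A ψ g := by
  simp only [paleyWeight, hf.nextCoeff_mul hg, neg_add, AddChar.map_add_eq_mul, eval_mul, map_mul,
    Int.cast_mul, Finset.prod_mul_distrib]
  ring

lemma paleyWeight_X_sub_C (t : F) :
    paleyWeight A ψ (X - C t) = (quadraticChar F (∏ a ∈ A, (a - t)) : ℂ) * ψ t := by
  simp [paleyWeight, nextCoeff_X_sub_C, map_prod]

lemma paleyWeight_minpoly_pow (hF : ringChar F ≠ 2) {K : Type*} [Field K] [Fintype K]
    [DecidableEq K] [Algebra F K] (t : K) :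
    paleyWeight A ψ (minpoly F t) ^ Module.finrank F⟮t⟯ K
      = (quadraticChar K (∏ a ∈ A, (algebraMap F K a - t)) : ℂ)
        * ψ (Algebra.trace F K t) := by
  rw [paleyWeight, mul_pow, ← AddChar.map_nsmul_eq_pow, trace_eq_finrank_mul_minpoly_nextCoeff,
    nsmul_eq_mul, ← Finset.prod_pow, map_prod, Int.cast_prod]
  congr 1
  refine Finset.prod_congr rfl fun a _ => ?_
  rw [← quadraticChar_norm hF (algebraMap F K a - t), norm_algebraMap_sub_eq_eval_minpoly_pow,
    map_pow, Int.cast_pow]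

lemma sum_paleyWeight_add_C_mul_eq_zero (hF : ringChar F ≠ 2) {g h : F[X]} {b : F} (hb : b ∈ A)
    (hhb : h.eval b ≠ 0) (hha : ∀ a ∈ A.erase b, h.eval a = 0)
    (hdeg : h.natDegree + 1 < g.natDegree) : ∑ c, paleyWeight A ψ (g + C c * h) = 0 := by
  have hlt (c : F) : (C c * h).natDegree + 1 < g.natDegree :=
    (Nat.succ_le_succ (natDegree_C_mul_le c h)).trans_lt hdeg
  have hnext (c : F) : (g + C c * h).nextCoeff = g.nextCoeff := by
    have hnat := natDegree_add_eq_left_of_natDegree_lt (Nat.lt_of_succ_lt (hlt c))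
    rw [nextCoeff_of_natDegree_pos (by omega), nextCoeff_of_natDegree_pos (by omega), hnat,
      coeff_add, coeff_eq_zero_of_natDegree_lt (Nat.lt_sub_of_add_lt (hlt c)), add_zero]
  have hprod (c : F) : ∏ a ∈ A.erase b, (quadraticChar F ((g + C c * h).eval a) : ℂ)
      = ∏ a ∈ A.erase b, (quadraticChar F (g.eval a) : ℂ) :=
    Finset.prod_congr rfl fun a ha => by simp [hha a ha]
  have hsum : ∑ c, (quadraticChar F ((g + C c * h).eval b) : ℂ) = 0 := by
    rw [Fintype.sum_equiv ((Equiv.mulRight₀ _ hhb).trans (Equiv.addLeft (g.eval b))) _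
      (fun x => (quadraticChar F x : ℂ)) fun c => by simp]
    exact_mod_cast quadraticChar_sum_zero hF
  simp only [paleyWeight, hnext, ← Finset.mul_prod_erase _ _ hb, hprod, ← Finset.sum_mul, hsum,
    zero_mul]

lemma sum_monics_paleyWeight_eq_zero (hF : ringChar F ≠ 2) (hA : A.Nonempty) {d : ℕ}
    (hd : #A < d) : ∑ g ∈ monics F d, paleyWeight A ψ g = 0 := by
  obtain ⟨b, hb⟩ := hA
  have hdeg : (∏ a ∈ A.erase b, (X - C a)).natDegree + 1 = #A := by
    rw [natDegree_finsetProd_X_sub_C_eq_card, card_erase_add_one hb]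
  refine sum_monics_eq_zero_of_sum_add_C_mul_eq_zero (h := ∏ a ∈ A.erase b, (X - C a)) (by omega)
    fun g hg => sum_paleyWeight_add_C_mul_eq_zero A ψ hF hb ?_ ?_ ?_
  · rw [eval_prod, Finset.prod_ne_zero_iff]
    intro a ha
    simpa [sub_eq_zero] using (ne_of_mem_erase ha).symm
  · intro a ha
    rw [eval_prod]
    exact Finset.prod_eq_zero ha (by simp)
  · rwa [hdeg, (mem_monics.1 hg).2]

lemma norm_sum_primePowers_paleyWeight_le (hF : ringChar F ≠ 2) (hA : A.Nonempty) {n : ℕ}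
    (hn : n ≠ 0) :
    ‖∑ x ∈ primePowers F n, (x.1.natDegree : ℂ) * paleyWeight A ψ x.1 ^ x.2‖
      ≤ (4 * (#A * Fintype.card F : ℕ) + 8) * √(ringChar F) * √(Fintype.card F) ^ n := by
  classical
  have : NeZero n := ⟨hn⟩
  have hp : (ringChar F).Prime := CharP.prime_ringChar F
  have : Fact (ringChar F).Prime := ⟨hp⟩
  let K := FiniteField.Extension F (ringChar F) n
  have : Fintype K := Fintype.ofFinite K
  have : CharP K (ringChar F) := (Algebra.charP_iff F K _).1 inferInstance
  have hcard : √(Fintype.card K) = √(Fintype.card F) ^ n := by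
    rw [← Nat.card_eq_fintype_card, FiniteField.natCard_extension, Nat.card_eq_fintype_card,
      Nat.cast_pow, Real.sqrt_eq_rpow, Real.sqrt_eq_rpow, Real.rpow_pow_comm (Nat.cast_nonneg _)]
  have hsum := sum_minpoly_eq_sum_primePowers (k := F) (K := K)
    fun P i => paleyWeight A ψ P ^ i
  simp only [K, FiniteField.finrank_extension, nsmul_eq_mul, paleyWeight_minpoly_pow A ψ hF] at hsum
  rw [← hsum, ← hcard]
  exact norm_sum_quadraticChar_mul_trace_le (ringChar F) (hp.odd_of_ne_two hF) hA ψ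

end LFunction

section WeilBound

open Polynomial Filter Topology

lemma ne_zero_of_deriv_eventuallyEq_mul {f D : ℂ → ℂ} {z : ℂ} (hf : AnalyticAt ℂ f z)
    (hD : AnalyticAt ℂ D z) (h : deriv f =ᶠ[𝓝 z] f * D) (hf0 : ¬∀ᶠ w in 𝓝 z, f w = 0) :
    f z ≠ 0 := by
  intro hz
  have horder : analyticOrderAt (deriv f) z + 1 = analyticOrderAt f z := by
    simpa [hz] using hf.analyticOrderAt_deriv_add_one
  rw [analyticOrderAt_congr h, analyticOrderAt_mul hf hD] at horder
  have htop : analyticOrderAt f z ≠ ⊤ := fun h => hf0 (analyticOrderAt_eq_top.1 h)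
  have hlt : analyticOrderAt f z < analyticOrderAt f z + analyticOrderAt D z + 1 :=
    ((ENat.lt_add_one_iff htop).2 le_rfl).trans_le (by gcongr; exact le_self_add)
  exact hlt.ne' horder

lemma analyticAt_tsum_mul_pow {c : ℕ → ℂ} {B R : ℝ} (hR : 0 < R) (hc : ∀ j, ‖c j‖ ≤ B * R ^ j)
    {z : ℂ} (hz : ‖z‖ < R⁻¹) : AnalyticAt ℂ (fun w => ∑' j, c j * w ^ j) z := by
  set P := FormalMultilinearSeries.ofScalars ℂ c
  have hradius : ENNReal.ofReal R⁻¹ ≤ P.radius := P.le_radius_of_bound B fun n => by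
    rw [FormalMultilinearSeries.ofScalars_norm, Real.coe_toNNReal _ (inv_pos.2 hR).le, inv_pow,
      ← div_eq_mul_inv, div_le_iff₀ (pow_pos hR n)]
    exact hc n
  have hz' : z ∈ Metric.eball (0 : ℂ) P.radius := by
    refine Metric.eball_subset_eball hradius ?_
    rwa [Metric.mem_eball, edist_zero_right, ← ofReal_norm,
      ENNReal.ofReal_lt_ofReal_iff (inv_pos.2 hR)]
  refine ((P.hasFPowerSeriesOnBall (pos_of_gt hz')).analyticAt_of_mem hz').congr ?_
  exact .of_forall fun w => FormalMultilinearSeries.ofScalars_sum_eq c w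

lemma norm_coeff_one_le_of_roots {L : ℂ[X]} (h0 : L.coeff 0 = 1) {R : ℝ} (hR : 0 < R)
    (hroots : ∀ z : ℂ, ‖z‖ < R⁻¹ → L.eval z ≠ 0) : ‖L.coeff 1‖ ≤ L.natDegree * R := by
  have heval : L.eval 0 = 1 := by rw [← coeff_zero_eq_eval_zero, h0]
  have hsum : L.coeff 1 = (L.roots.map fun z => 1 / (0 - z)).sum := by
    rw [← (IsAlgClosed.splits L).eval_derivative_div_eval_of_ne_zero (by simp [heval]), heval,
      ← coeff_zero_eq_eval_zero, coeff_derivative]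
    simp
  have hroot : ∀ z ∈ L.roots, ‖1 / (0 - z)‖ ≤ R := fun z hz => by
    have hle : R⁻¹ ≤ ‖z‖ := not_lt.1 fun hlt => hroots z hlt (isRoot_of_mem_roots hz)
    simpa using inv_le_of_inv_le₀ hR hle
  calc ‖L.coeff 1‖ ≤ ((L.roots.map fun z => 1 / (0 - z)).map norm).sum :=
        hsum ▸ norm_multiset_sum_le _
    _ ≤ Multiset.card L.roots * R := by
        rw [Multiset.map_map, ← nsmul_eq_mul]
        refine (Multiset.sum_le_card_nsmul _ R fun x hx => ?_).trans_eq (by rw [Multiset.card_map])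
        obtain ⟨z, hz, rfl⟩ := Multiset.mem_map.1 hx
        exact hroot z hz
    _ ≤ L.natDegree * R := by
        gcongr
        exact card_roots' L

lemma hasSum_coeff_mul_pow (Q : ℂ[X]) (z : ℂ) : HasSum (fun d => Q.coeff d * z ^ d) (Q.eval z) := by
  rw [eval_eq_sum_range]
  refine hasSum_sum_of_ne_finset_zero fun d hd => ?_
  rw [coeff_eq_zero_of_natDegree_lt (by simpa using hd), zero_mul]

lemma eval_derivative_eq_mul_tsum {L : ℂ[X]} {S : ℕ → ℂ}
    (hrec : ∀ d : ℕ, (d : ℂ) * L.coeff d = ∑ j ∈ Icc 1 d, S j * L.coeff (d - j)) {z : ℂ}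
    (hS : Summable fun j => ‖S (j + 1) * z ^ j‖) :
    L.derivative.eval z = L.eval z * ∑' j, S (j + 1) * z ^ j := by
  have hrec' (d : ℕ) : L.coeff (d + 1) * (d + 1)
      = ∑ x ∈ antidiagonal d, S (x.1 + 1) * L.coeff x.2 := by
    have h := hrec (d + 1)
    rw [Nat.cast_succ, ← Finset.Ico_add_one_right_eq_Icc, Finset.sum_Ico_eq_sum_range] at h
    rw [Finset.Nat.sum_antidiagonal_eq_sum_range_succ (fun i j => S (i + 1) * L.coeff j), mul_comm,
      h]
    refine Finset.sum_congr rfl fun j _ => ?_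
    rw [add_comm 1 j, Nat.add_sub_add_right]
  have hL : Summable fun d => ‖L.coeff d * z ^ d‖ :=
    summable_of_ne_finset_zero (s := range (L.natDegree + 1)) fun d hd => by
      rw [coeff_eq_zero_of_natDegree_lt (by simpa using hd), zero_mul, norm_zero]
  rw [mul_comm, ← (hasSum_coeff_mul_pow L z).tsum_eq,
    tsum_mul_tsum_eq_tsum_sum_antidiagonal_of_summable_norm hS hL,
    ← (hasSum_coeff_mul_pow (derivative L) z).tsum_eq]
  refine tsum_congr fun d => ?_
  rw [coeff_derivative, hrec', Finset.sum_mul]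
  refine Finset.sum_congr rfl fun x hx => ?_
  rw [← mem_antidiagonal.1 hx, pow_add]
  ring

lemma eval_ne_zero_of_powerSums_bound {L : ℂ[X]} (hL : L ≠ 0) {S : ℕ → ℂ}
    (hrec : ∀ d : ℕ, (d : ℂ) * L.coeff d = ∑ j ∈ Icc 1 d, S j * L.coeff (d - j)) {B R : ℝ}
    (hR : 0 < R) (hS : ∀ j, j ≠ 0 → ‖S j‖ ≤ B * R ^ j) {z : ℂ} (hz : ‖z‖ < R⁻¹) :
    L.eval z ≠ 0 := by
  have hS' (j : ℕ) : ‖S (j + 1)‖ ≤ B * R * R ^ j :=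
    (hS (j + 1) j.succ_ne_zero).trans_eq (by ring)
  have hsummable {w : ℂ} (hw : ‖w‖ < R⁻¹) : Summable fun j => ‖S (j + 1) * w ^ j‖ := by
    have hlt : R * ‖w‖ < 1 := by rwa [← lt_inv_mul_iff₀ hR, mul_one]
    refine .of_nonneg_of_le (fun _ => norm_nonneg _) (fun j => ?_)
      ((summable_geometric_of_lt_one (by positivity) hlt).mul_left (B * R))
    rw [norm_mul, norm_pow, mul_pow, ← mul_assoc]
    gcongr
    exact hS' j
  refine ne_zero_of_deriv_eventuallyEq_mul (f := fun w => L.eval w) (L.differentiable.analyticAt z)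
    (analyticAt_tsum_mul_pow hR hS' hz) ?_ fun h0 => hL ?_
  · filter_upwards [(continuous_norm.tendsto z).eventually_lt_const hz] with w hw
    rw [Polynomial.deriv, Pi.mul_apply, eval_derivative_eq_mul_tsum hrec (hsummable hw)]
  · exact eq_zero_of_infinite_isRoot L (infinite_of_mem_nhds z h0)

lemma norm_le_of_powerSums_bound {a S : ℕ → ℂ} {m : ℕ} (h0 : a 0 = 1) (hm : ∀ d, m < d → a d = 0)
    (hrec : ∀ d : ℕ, (d : ℂ) * a d = ∑ j ∈ Icc 1 d, S j * a (d - j)) {B R : ℝ} (hR : 0 < R)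
    (hS : ∀ j, j ≠ 0 → ‖S j‖ ≤ B * R ^ j) : ‖a 1‖ ≤ m * R := by
  set L : ℂ[X] := (PowerSeries.mk a).trunc (m + 1)
  have hcoeff (d : ℕ) : L.coeff d = a d := by
    rw [PowerSeries.coeff_trunc, PowerSeries.coeff_mk]
    split_ifs with h
    · rfl
    · exact (hm d (by omega)).symm
  have hL0 : L ≠ 0 := fun h => by simpa [h, h0] using hcoeff 0
  simp only [← hcoeff] at h0 hrec ⊢
  refine (norm_coeff_one_le_of_roots h0 hR fun z hz =>
    eval_ne_zero_of_powerSums_bound hL0 hrec hR hS hz).trans ?_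
  gcongr
  exact Nat.lt_succ_iff.1 (PowerSeries.natDegree_trunc_lt _ m)

lemma norm_sum_quadraticChar_mul_addChar_le {F : Type*} [Field F] [Fintype F] [DecidableEq F]
    (hF : ringChar F ≠ 2) {A : Finset F} (hA : A.Nonempty) (ψ : AddChar F ℂ) :
    ‖∑ t, (quadraticChar F (∏ a ∈ A, (a - t)) : ℂ) * ψ t‖ ≤ #A * √(Fintype.card F) := by
  simp only [← paleyWeight_X_sub_C, ← sum_monics_one]
  refine norm_le_of_powerSums_bound (a := fun d => ∑ g ∈ monics F d, paleyWeight A ψ g)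
    (by simp [monics_zero, paleyWeight_one])
    (fun d hd => sum_monics_paleyWeight_eq_zero A ψ hF hA hd)
    (natCast_mul_sum_monics_eq (paleyWeight_one A ψ) fun f g hf hg => paleyWeight_mul A ψ hf hg)
    (Real.sqrt_pos.2 (Nat.cast_pos.2 Fintype.card_pos))
    fun j hj => norm_sum_primePowers_paleyWeight_le A ψ hF hA hj

end WeilBound

section Fourier

variable {α : Type*} [AddCommGroup α] [Fintype α]

/-- The unnormalised Fourier transform on a finite abelian group, with kernel `ψ` rather than its
conjugate. -/
noncomputable def fourierSum (f : α → ℂ) (ψ : AddChar α ℂ) : ℂ :=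
  ∑ u, f u * ψ u

lemma sum_fourierSum_mul_apply_neg (f : α → ℂ) (s : α) :
    ∑ ψ : AddChar α ℂ, fourierSum f ψ * ψ (-s) = Fintype.card α * f s := by
  classical
  simp_rw [fourierSum, Finset.sum_mul, mul_assoc, ← AddChar.map_add_eq_mul]
  rw [Finset.sum_comm]
  simp_rw [← Finset.mul_sum, AddChar.sum_apply_eq_ite, ← sub_eq_add_neg, sub_eq_zero]
  simp [mul_comm]

open ComplexConjugate in
lemma sum_norm_fourierSum_sq (f : α → ℂ) :
    ∑ ψ : AddChar α ℂ, ‖fourierSum f ψ‖ ^ 2 = Fintype.card α * ∑ u, ‖f u‖ ^ 2 := by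
  have hconj (ψ : AddChar α ℂ) : conj (fourierSum f ψ) = ∑ s, conj (f s) * ψ (-s) := by
    simp only [fourierSum, map_sum, map_mul, AddChar.map_neg_eq_conj]
  apply Complex.ofReal_injective
  push_cast
  calc ∑ ψ : AddChar α ℂ, (‖fourierSum f ψ‖ : ℂ) ^ 2
      = ∑ ψ : AddChar α ℂ, ∑ s, conj (f s) * (fourierSum f ψ * ψ (-s)) :=
        Finset.sum_congr rfl fun ψ _ => by
          rw [← Complex.mul_conj', hconj, Finset.mul_sum]
          exact Finset.sum_congr rfl fun s _ => by ring
    _ = ∑ s, conj (f s) * (Fintype.card α * f s) := by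
        rw [Finset.sum_comm]
        simp only [← Finset.mul_sum, sum_fourierSum_mul_apply_neg]
    _ = Fintype.card α * ∑ s, (‖f s‖ : ℂ) ^ 2 := by
        rw [Finset.mul_sum]
        exact Finset.sum_congr rfl fun s _ => by rw [← Complex.mul_conj']; ring

lemma sum_norm_fourierSum_inv_sq_le {f : α → ℂ} (hf : ∀ u, ‖f u‖ ≤ 1) :
    ∑ ψ : AddChar α ℂ, ‖fourierSum f ψ⁻¹‖ ^ 2 ≤ (Fintype.card α : ℝ) ^ 2 := by
  have hinv := Equiv.sum_comp (Equiv.inv (AddChar α ℂ)) fun ψ => ‖fourierSum f ψ‖ ^ 2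
  simp only [Equiv.inv_apply] at hinv
  rw [hinv, sum_norm_fourierSum_sq, sq]
  gcongr
  exact (Finset.sum_le_card_nsmul _ _ 1 fun u _ => pow_le_one₀ (norm_nonneg _) (hf u)).trans_eq
    (by simp)

lemma card_mul_sum_mul_mul_add (f g G : α → ℂ) :
    Fintype.card α * ∑ u, ∑ v, f u * g v * G (u + v)
      = ∑ ψ : AddChar α ℂ, fourierSum G ψ * (fourierSum f ψ⁻¹ * fourierSum g ψ⁻¹) := by
  have hψ (ψ : AddChar α ℂ) : fourierSum G ψ * (fourierSum f ψ⁻¹ * fourierSum g ψ⁻¹)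
      = ∑ u, ∑ v, f u * g v * (fourierSum G ψ * ψ (-(u + v))) := by
    rw [fourierSum, fourierSum, fourierSum, Finset.sum_mul_sum, Finset.mul_sum]
    refine Finset.sum_congr rfl fun u _ => ?_
    rw [Finset.mul_sum]
    refine Finset.sum_congr rfl fun v _ => ?_
    rw [neg_add, AddChar.map_add_eq_mul, AddChar.inv_apply, AddChar.inv_apply]
    ring
  rw [Finset.sum_congr rfl fun ψ _ => hψ ψ, Finset.sum_comm (s := univ (α := AddChar α ℂ)),
    Finset.mul_sum]
  refine Finset.sum_congr rfl fun u _ => ?_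
  rw [Finset.sum_comm, Finset.mul_sum]
  refine Finset.sum_congr rfl fun v _ => ?_
  rw [← Finset.mul_sum, sum_fourierSum_mul_apply_neg]
  ring

lemma norm_sum_mul_mul_add_le {f g G : α → ℂ} {M : ℝ} (hf : ∀ u, ‖f u‖ ≤ 1) (hg : ∀ u, ‖g u‖ ≤ 1)
    (hG : ∀ ψ : AddChar α ℂ, ‖fourierSum G ψ‖ ≤ M) :
    ‖∑ u, ∑ v, f u * g v * G (u + v)‖ ≤ M * Fintype.card α := by
  have hM : 0 ≤ M := (norm_nonneg _).trans (hG 1)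
  have hcard : (0 : ℝ) < Fintype.card α := Nat.cast_pos.2 Fintype.card_pos
  refine le_of_mul_le_mul_left ?_ hcard
  calc Fintype.card α * ‖∑ u, ∑ v, f u * g v * G (u + v)‖
      = ‖∑ ψ : AddChar α ℂ, fourierSum G ψ * (fourierSum f ψ⁻¹ * fourierSum g ψ⁻¹)‖ := by
        rw [← card_mul_sum_mul_mul_add, norm_mul, Complex.norm_natCast]
    _ ≤ ∑ ψ : AddChar α ℂ, M * ((‖fourierSum f ψ⁻¹‖ ^ 2 + ‖fourierSum g ψ⁻¹‖ ^ 2) / 2) := by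
        refine norm_sum_le_of_le _ fun ψ _ => ?_
        rw [norm_mul, norm_mul]
        refine mul_le_mul (hG ψ) ?_ (by positivity) hM
        linarith [two_mul_le_add_sq ‖fourierSum f ψ⁻¹‖ ‖fourierSum g ψ⁻¹‖]
    _ ≤ M * (((Fintype.card α : ℝ) ^ 2 + (Fintype.card α : ℝ) ^ 2) / 2) := by
        rw [← Finset.mul_sum, ← Finset.sum_div, Finset.sum_add_distrib]
        gcongr
        · exact sum_norm_fourierSum_inv_sq_le hf
        · exact sum_norm_fourierSum_inv_sq_le hg
    _ = Fintype.card α * (M * Fintype.card α) := by ring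

end Fourier

section CylinderCorrelation

variable {α : Type*} [AddCommGroup α] [Fintype α] {n : ℕ} {W : α → ℝ}

/-- `M` bounds the correlation of `x ↦ W (x₁ + ⋯ + xₙ)` with every product of `n` functions bounded
by `1` of which the `i`-th does not depend on the coordinate `xᵢ` (the sums are not normalised). -/
def CylinderCorrelationLE (n : ℕ) (W : α → ℝ) (M : ℝ) : Prop :=
  ∀ f : Fin n → (Fin n → α) → ℝ, (∀ i x, |f i x| ≤ 1) → (∀ i, DependsOn (f i) {i}ᶜ) →
    |∑ x, W (∑ i, x i) * ∏ i, f i x| ≤ M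

lemma abs_mul_prod_le_one {ι : Type*} {s : Finset ι} {w : ℝ} {g : ι → ℝ} (hw : |w| ≤ 1)
    (hg : ∀ i, |g i| ≤ 1) : |w * ∏ i ∈ s, g i| ≤ 1 := by
  rw [abs_mul, Finset.abs_prod]
  exact mul_le_one₀ hw (prod_nonneg fun _ _ => abs_nonneg _)
    (prod_le_one (fun _ _ => abs_nonneg _) fun i _ => hg i)

lemma cylinderCorrelationLE_card_pow (hW : ∀ s, |W s| ≤ 1) :
    CylinderCorrelationLE n W ((Fintype.card α : ℝ) ^ n) := fun f hf _ =>
  (abs_sum_le_sum_abs _ _).trans <|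
    (Finset.sum_le_card_nsmul _ _ 1 fun _ _ => abs_mul_prod_le_one (hW _) fun i => hf i _).trans
      (by simp)

lemma cylinderCorrelationLE_two {M : ℝ}
    (hW : ∀ ψ : AddChar α ℂ, ‖fourierSum (fun s => (W s : ℂ)) ψ‖ ≤ M) :
    CylinderCorrelationLE 2 W (M * Fintype.card α) := by
  intro f hf hdep
  have h0 (u v : α) : f 0 ![u, v] = f 0 ![0, v] := hdep 0 fun j hj => by
    fin_cases j
    · exact absurd rfl hj
    · rfl
  have h1 (u v : α) : f 1 ![u, v] = f 1 ![u, 0] := hdep 1 fun j hj => by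
    fin_cases j
    · rfl
    · exact absurd rfl hj
  have hsum : ∑ x : Fin 2 → α, W (∑ i, x i) * ∏ i, f i x
      = ∑ u, ∑ v, f 1 ![u, 0] * f 0 ![0, v] * W (u + v) := by
    rw [← Fintype.sum_prod_type', ← (finTwoArrowEquiv α).symm.sum_comp]
    refine Finset.sum_congr rfl fun x _ => ?_
    simp only [finTwoArrowEquiv_symm_apply, Fin.sum_univ_two, Fin.prod_univ_two, h0 x.1, h1 x.1,
      Matrix.cons_val_zero, Matrix.cons_val_one]
    ring
  have hbound := norm_sum_mul_mul_add_le (f := fun u => (f 1 ![u, 0] : ℂ))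
    (g := fun v => (f 0 ![0, v] : ℂ)) (fun u => by simpa using hf 1 _)
    (fun v => by simpa using hf 0 _) hW
  rw [hsum]
  exact_mod_cast hbound

lemma sum_sq_sum_eq {ι κ : Type*} [Fintype ι] [Fintype κ] (H : κ → ι → ℝ) :
    ∑ x, (∑ y, H y x) ^ 2 = ∑ y, ∑ y', ∑ x, H y x * H y' x := by
  simp_rw [sq, Finset.sum_mul_sum]
  rw [Finset.sum_comm]
  exact Finset.sum_congr rfl fun _ _ => Finset.sum_comm

lemma sum_mul_prod_eq_sum_mul_sum_cons {f : Fin (n + 1) → (Fin (n + 1) → α) → ℝ}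
    (hf : DependsOn (f 0) {0}ᶜ) :
    ∑ x, W (∑ i, x i) * ∏ i, f i x
      = ∑ x : Fin n → α, f 0 (Fin.cons 0 x) *
          ∑ y, W (y + ∑ i, x i) * ∏ i : Fin n, f i.succ (Fin.cons y x) := by
  have h0 (y : α) (x : Fin n → α) : f 0 (Fin.cons y x) = f 0 (Fin.cons 0 x) := hf fun j hj => by
    obtain ⟨i, rfl⟩ := Fin.exists_succ_eq.2 hj
    simp
  rw [← (Fin.consEquiv fun _ => α).sum_comp, Fintype.sum_prod_type, Finset.sum_comm]
  refine Finset.sum_congr rfl fun x _ => ?_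
  rw [Finset.mul_sum]
  refine Finset.sum_congr rfl fun y _ => ?_
  have hcons : Fin.consEquiv (fun _ : Fin (n + 1) => α) (y, x) = Fin.cons y x := rfl
  rw [hcons, Fin.sum_univ_succ, Fin.prod_univ_succ, h0 y x]
  simp only [Fin.cons_zero, Fin.cons_succ]
  ring

/-- Cauchy–Schwarz in the coordinates other than the first eliminates the factor that does not
depend on the first one. -/
lemma CylinderCorrelationLE.succ {B : α → α → ℝ}
    (hB : ∀ y y', CylinderCorrelationLE n (fun s => W (y + s) * W (y' + s)) (B y y')) :
    CylinderCorrelationLE (n + 1) W √((Fintype.card α : ℝ) ^ n * ∑ y, ∑ y', B y y') := by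
  intro f hf hdep
  set H : α → (Fin n → α) → ℝ := fun y x => W (y + ∑ i, x i) * ∏ i : Fin n, f i.succ (Fin.cons y x)
    with hH
  have hcons (i : Fin n) (y : α) : DependsOn (fun x => f i.succ (Fin.cons y x)) {i}ᶜ :=
    fun x x' hx => hdep i.succ fun j => by
      refine Fin.cases (fun _ => rfl) (fun j hj => ?_) j
      simpa using hx j fun h => hj (congrArg Fin.succ h)
  have hcorr (y y' : α) : ∑ x, H y x * H y' x ≤ B y y' := by
    have hB := hB y y' (fun i x => f i.succ (Fin.cons y x) * f i.succ (Fin.cons y' x))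
      (fun i x => by rw [abs_mul]; exact mul_le_one₀ (hf _ _) (abs_nonneg _) (hf _ _))
      (fun i x x' hx => congrArg₂ (· * ·) (hcons i y hx) (hcons i y' hx))
    simp only [Finset.prod_mul_distrib] at hB
    simp only [hH, mul_mul_mul_comm (W _)]
    exact (le_abs_self _).trans hB
  rw [sum_mul_prod_eq_sum_mul_sum_cons (hdep 0)]
  refine Real.abs_le_sqrt ((Finset.sum_mul_sq_le_sq_mul_sq _ _ _).trans ?_)
  rw [sum_sq_sum_eq H]
  refine mul_le_mul ?_ (Finset.sum_le_sum fun y _ => Finset.sum_le_sum fun y' _ => hcorr y y')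
    (by rw [← sum_sq_sum_eq]; positivity) (by positivity)
  refine (Finset.sum_le_card_nsmul _ _ 1 fun x _ => ?_).trans_eq (by simp)
  exact (sq_le_one_iff_abs_le_one _).2 (hf _ _)

end CylinderCorrelation

section PaleyCorrelation

variable {F : Type*} [Field F] [Fintype F] [DecidableEq F]

/-- The product `χ(a₁ - s) ⋯ χ(aₘ - s)` of translated quadratic characters attached to the finite
set `A = {a₁, …, aₘ}`. -/
noncomputable def paleyProd (A : Finset F) (s : F) : ℝ :=
  (quadraticChar F (∏ a ∈ A, (a - s)) : ℝ)

lemma abs_paleyProd_le_one (A : Finset F) (s : F) : |paleyProd A s| ≤ 1 := by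
  rw [paleyProd]
  exact_mod_cast abs_quadraticChar_le_one _

lemma paleyProd_add (A : Finset F) (y s : F) :
    paleyProd A (y + s) = paleyProd (A.image (· - y)) s := by
  rw [paleyProd, paleyProd, Finset.prod_image fun a _ b _ h => sub_left_injective h]
  simp only [sub_sub]

lemma paleyProd_mul_of_disjoint {A B : Finset F} (h : Disjoint A B) (s : F) :
    paleyProd A s * paleyProd B s = paleyProd (A ∪ B) s := by
  simp only [paleyProd]
  rw [Finset.prod_union h, map_mul, Int.cast_mul]

lemma card_not_disjoint_translates_le (A : Finset F) :
    #{y : F × F | ¬ Disjoint (A.image (· - y.1)) (A.image (· - y.2))}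
      ≤ #A ^ 2 * Fintype.card F := by
  have hsub : ({y : F × F | ¬ Disjoint (A.image (· - y.1)) (A.image (· - y.2))} : Finset (F × F)) ⊆
      ((A ×ˢ A) ×ˢ (univ : Finset F)).image fun z => (z.2, z.1.2 - z.1.1 + z.2) := by
    rintro ⟨y, y'⟩ hy
    simp only [mem_filter, mem_univ, true_and, Finset.not_disjoint_iff, mem_image] at hy
    obtain ⟨c, ⟨a, ha, rfl⟩, b, hb, hab⟩ := hy
    refine mem_image.2 ⟨((a, b), y), by simp [ha, hb], ?_⟩
    simp only [Prod.mk.injEq, true_and]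
    linear_combination hab
  refine (card_le_card hsub).trans (card_image_le.trans ?_)
  simp [card_product, sq]

lemma rpow_neg_half_pow_succ_sq {x : ℝ} (hx : 0 ≤ x) (n : ℕ) :
    (x ^ (-(1 / 2 : ℝ) ^ (n + 1))) ^ 2 = x ^ (-(1 / 2 : ℝ) ^ n) := by
  rw [← Real.rpow_natCast, ← Real.rpow_mul hx, pow_succ]
  congr 1
  push_cast
  ring

lemma one_le_mul_rpow_neg_half_pow {x : ℝ} (hx : 1 ≤ x) (n : ℕ) :
    1 ≤ x * x ^ (-(1 / 2 : ℝ) ^ n) := by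
  rw [mul_comm, ← Real.rpow_add_one (by positivity)]
  refine Real.one_le_rpow hx ?_
  linarith [pow_le_one₀ (n := n) (by norm_num : (0 : ℝ) ≤ 1 / 2) (by norm_num)]

lemma cylinderCorrelationLE_paleyProd_mul {n : ℕ} {M : ℝ} (hM : 0 ≤ M)
    (h : ∀ A : Finset F, A.Nonempty → CylinderCorrelationLE n (paleyProd A) (#A * M))
    {A : Finset F} (hA : A.Nonempty) (y y' : F) :
    CylinderCorrelationLE n (fun s => paleyProd A (y + s) * paleyProd A (y' + s))
      (2 * #A * M + (Fintype.card F : ℝ) ^ n *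
        if Disjoint (A.image (· - y)) (A.image (· - y')) then 0 else 1) := by
  simp only [paleyProd_add]
  split_ifs with hdisj
  · have hcard : #(A.image (· - y) ∪ A.image (· - y')) = 2 * #A := by
      rw [card_union_of_disjoint hdisj, card_image_of_injective _ sub_left_injective,
        card_image_of_injective _ sub_left_injective, two_mul]
    simpa [paleyProd_mul_of_disjoint hdisj, hcard] using
      h (A.image (· - y) ∪ A.image (· - y')) ((hA.image _).mono subset_union_left)
  · intro f hf hdep
    refine (cylinderCorrelationLE_card_pow
      (W := fun s => paleyProd (A.image (· - y)) s * paleyProd (A.image (· - y')) s)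
      (fun s => ?_) f hf hdep).trans ?_
    · rw [abs_mul]
      exact mul_le_one₀ (abs_paleyProd_le_one _ _) (abs_nonneg _) (abs_paleyProd_le_one _ _)
    · rw [mul_one, le_add_iff_nonneg_left]
      positivity

lemma sum_ite_disjoint_translates_le (A : Finset F) :
    ∑ y, ∑ y', (if Disjoint (A.image (· - y)) (A.image (· - y')) then (0 : ℝ) else 1)
      ≤ #A ^ 2 * Fintype.card F := by
  rw [← Fintype.sum_prod_type' (f := fun y y' =>
    if Disjoint (A.image (· - y)) (A.image (· - y')) then (0 : ℝ) else 1)]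
  simp_rw [← ite_not (Disjoint _ _), Finset.sum_boole]
  exact_mod_cast card_not_disjoint_translates_le A

lemma cylinderCorrelationLE_two_paleyProd (hF : ringChar F ≠ 2) {A : Finset F}
    (hA : A.Nonempty) :
    CylinderCorrelationLE 2 (paleyProd A) (#A * (√(Fintype.card F) * Fintype.card F)) := by
  rw [← mul_assoc]
  refine cylinderCorrelationLE_two fun ψ => ?_
  simpa [fourierSum, paleyProd] using norm_sum_quadraticChar_mul_addChar_le hF hA ψ

/-- Sets of size `2 * #A` arise from disjoint translates of `A`, so the bound for `n + 1` variables
has to be linear in `#A` for the induction to close. -/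
lemma cylinderCorrelationLE_paleyProd (hF : ringChar F ≠ 2) {n : ℕ} (hn : 1 ≤ n) {A : Finset F}
    (hA : A.Nonempty) :
    CylinderCorrelationLE (n + 1) (paleyProd A)
      (#A * (3 * ((Fintype.card F : ℝ) ^ (n + 1) *
        (Fintype.card F : ℝ) ^ (-(1 / 2 : ℝ) ^ n)))) := by
  set q : ℝ := (Fintype.card F : ℝ) with hq
  have hq1 : 1 ≤ q := Nat.one_le_cast.2 Fintype.card_pos
  induction n, hn using Nat.le_induction generalizing A with
  | base =>
    intro f hf hdep
    refine (cylinderCorrelationLE_two_paleyProd hF hA f hf hdep).trans ?_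
    have hsqrt : q ^ (1 + 1) * q ^ (-(1 / 2 : ℝ) ^ 1) = √q * q := by
      rw [Real.sqrt_eq_rpow, ← Real.rpow_natCast, ← Real.rpow_add (by positivity),
        ← Real.rpow_add_one (by positivity)]
      norm_num
    rw [hsqrt, ← hq]
    exact mul_le_mul_of_nonneg_left (by linarith [show 0 ≤ √q * q by positivity])
      (Nat.cast_nonneg _)
  | succ n _ ih =>
    have hN : (1 : ℝ) ≤ #A := by exact_mod_cast card_pos.2 hA
    set ε : ℝ := q ^ (-(1 / 2 : ℝ) ^ n) with hε
    have hqε : 1 ≤ q * ε := one_le_mul_rpow_neg_half_pow hq1 n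
    intro f hf hdep
    refine (CylinderCorrelationLE.succ
      (cylinderCorrelationLE_paleyProd_mul (by positivity) (fun A hA => ih hA) hA)
      f hf hdep).trans (Real.sqrt_le_iff.2 ⟨by positivity, ?_⟩)
    simp_rw [Finset.sum_add_distrib, ← Finset.mul_sum, Finset.sum_const, card_univ, nsmul_eq_mul,
      ← hq]
    calc q ^ (n + 1) * (2 * #A * (3 * (q ^ (n + 1) * (q * (q * ε)))) + q ^ (n + 1) *
          ∑ y, ∑ y', if Disjoint (A.image (· - y)) (A.image (· - y')) then (0 : ℝ) else 1)
        ≤ q ^ (n + 1) * (2 * #A * (3 * (q ^ (n + 1) * (q * (q * ε)))) + q ^ (n + 1) *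
          (#A ^ 2 * q)) := by gcongr; exact sum_ite_disjoint_translates_le A
      _ = (q ^ (n + 1)) ^ 2 * q * (6 * #A * (q * ε) + #A ^ 2) := by ring
      _ ≤ (q ^ (n + 1)) ^ 2 * q * (9 * #A ^ 2 * (q * ε)) := by
          gcongr
          nlinarith [mul_le_mul_of_nonneg_left hN (by positivity : 0 ≤ #A * (q * ε)),
            mul_le_mul_of_nonneg_left hqε (by positivity : (0 : ℝ) ≤ #A ^ 2)]
      _ = (#A * (3 * (q ^ (n + 1 + 1) * q ^ (-(1 / 2 : ℝ) ^ (n + 1))))) ^ 2 := by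
          rw [mul_pow, mul_pow 3, mul_pow _ (q ^ (-(1 / 2 : ℝ) ^ (n + 1))),
            rpow_neg_half_pow_succ_sq (by positivity), ← hε]
          ring

lemma cylinderCorrelationLE_quadraticChar (hF : ringChar F ≠ 2) {n : ℕ} (hn : 1 ≤ n) :
    CylinderCorrelationLE (n + 1) (fun s : F => (quadraticChar F s : ℝ))
      (3 * ((Fintype.card F : ℝ) ^ (n + 1) * (Fintype.card F : ℝ) ^ (-(1 / 2 : ℝ) ^ n))) := by
  intro f hf hdep
  have hχ (s : F) : (quadraticChar F s : ℝ) = quadraticChar F (-1) * paleyProd {0} s := by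
    rw [paleyProd, prod_singleton, zero_sub, ← Int.cast_mul, ← map_mul, neg_one_mul, neg_neg]
  have h := cylinderCorrelationLE_paleyProd hF hn (singleton_nonempty (0 : F)) f hf hdep
  rw [card_singleton, Nat.cast_one, one_mul] at h
  have hsum : ∑ x : Fin (n + 1) → F, (quadraticChar F (∑ i, x i) : ℝ) * ∏ i, f i x
      = quadraticChar F (-1) * ∑ x, paleyProd {0} (∑ i, x i) * ∏ i, f i x := by
    rw [Finset.mul_sum]
    exact Finset.sum_congr rfl fun x _ => by rw [hχ (∑ i, x i), mul_assoc]
  rw [hsum, abs_mul]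
  refine (mul_le_of_le_one_left (abs_nonneg _) ?_).trans h
  exact_mod_cast abs_quadraticChar_le_one (-1 : F)

end PaleyCorrelation

section InjectiveTuples

variable {α : Type*} [Fintype α] {n : ℕ}

lemma pow_succ_le_descFactorial_add (q n : ℕ) :
    q ^ (n + 1) ≤ q.descFactorial (n + 1) + (n + 1).choose 2 * q ^ n := by
  induction n with
  | zero => simp
  | succ n ih =>
    calc q ^ (n + 2) = q * q ^ (n + 1) := pow_succ' _ _
      _ ≤ q * (q.descFactorial (n + 1) + (n + 1).choose 2 * q ^ n) := by gcongr
      _ = q * q.descFactorial (n + 1) + (n + 1).choose 2 * q ^ (n + 1) := by ring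
      _ ≤ (q - (n + 1) + (n + 1)) * q.descFactorial (n + 1)
          + (n + 1).choose 2 * q ^ (n + 1) := by gcongr; exact le_tsub_add
      _ = q.descFactorial (n + 2) + (n + 1) * q.descFactorial (n + 1)
          + (n + 1).choose 2 * q ^ (n + 1) := by rw [Nat.descFactorial_succ q (n + 1)]; ring
      _ ≤ q.descFactorial (n + 2) + (n + 1) * q ^ (n + 1)
          + (n + 1).choose 2 * q ^ (n + 1) := by gcongr; exact Nat.descFactorial_le_pow _ _
      _ = q.descFactorial (n + 2) + (n + 2).choose 2 * q ^ (n + 1) := by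
          rw [Nat.choose_succ_succ' (n + 1) 1, Nat.choose_one_right]; ring

lemma card_injective_eq_descFactorial [DecidableEq α] (n : ℕ) :
    #{x : Fin n → α | Function.Injective x} = (Fintype.card α).descFactorial n := by
  rw [← Fintype.card_subtype, Fintype.card_congr (Equiv.subtypeInjectiveEquivEmbedding _ _),
    Fintype.card_embedding_eq, Fintype.card_fin]

lemma card_not_injective_le [DecidableEq α] (n : ℕ) :
    #{x : Fin (n + 1) → α | ¬ Function.Injective x}
      ≤ (n + 1).choose 2 * Fintype.card α ^ n := by
  have hsplit := card_filter_add_card_filter_not (s := (univ : Finset (Fin (n + 1) → α)))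
    Function.Injective
  rw [card_injective_eq_descFactorial, card_univ, Fintype.card_fun, Fintype.card_fin] at hsplit
  have := pow_succ_le_descFactorial_add (Fintype.card α) n
  omega

variable [DecidableEq α]

lemma card_injective_image_eq {σ : Finset α} (hσ : #σ = n) :
    #{x : Fin n → α | Function.Injective x ∧ univ.image x = σ} = n.factorial := by
  have hcard : #(univ : Finset (Fin n ≃ σ)) = n.factorial := by
    rw [card_univ, Fintype.card_equiv (σ.equivFinOfCardEq hσ).symm, Fintype.card_fin]
  rw [← hcard]
  symm
  refine Finset.card_bij (fun e _ i => (e i : α)) (fun e _ => ?_)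
    (fun e _ e' _ h => Equiv.ext fun i => Subtype.ext (congrFun h i)) fun x hx => ?_
  · refine mem_filter.2 ⟨mem_univ _, Subtype.val_injective.comp e.injective, ?_⟩
    ext a
    rw [mem_image]
    exact ⟨fun ⟨i, _, hi⟩ => hi ▸ (e i).2, fun ha => ⟨e.symm ⟨a, ha⟩, mem_univ _, by simp⟩⟩
  · obtain ⟨-, hinj, himg⟩ := mem_filter.1 hx
    have hmem (i : Fin n) : x i ∈ σ := himg ▸ mem_image_of_mem x (mem_univ i)
    refine ⟨Equiv.ofBijective (fun i => ⟨x i, hmem i⟩)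
      ⟨fun i j h => hinj (congrArg Subtype.val h), ?_⟩, mem_univ _, rfl⟩
    rintro ⟨a, ha⟩
    obtain ⟨i, -, rfl⟩ := mem_image.1 (himg.symm ▸ ha)
    exact ⟨i, rfl⟩

lemma sum_injective_image_eq (n : ℕ) (h : Finset α → ℝ) :
    ∑ x : Fin n → α with Function.Injective x, h (univ.image x)
      = n.factorial * ∑ σ ∈ powersetCard n univ, h σ := by
  have hmaps : ∀ x ∈ ({x : Fin n → α | Function.Injective x} : Finset (Fin n → α)),
      univ.image x ∈ powersetCard n (univ : Finset α) := fun x hx =>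
    mem_powersetCard_univ.2 (by
      rw [card_image_of_injective _ (mem_filter.1 hx).2, card_univ, Fintype.card_fin])
  rw [← Finset.sum_fiberwise_of_maps_to hmaps, Finset.mul_sum]
  refine Finset.sum_congr rfl fun σ hσ => ?_
  rw [Finset.sum_congr rfl fun x hx => congrArg h (mem_filter.1 hx).2, Finset.sum_const,
    Finset.filter_filter, card_injective_image_eq (mem_powersetCard_univ.1 hσ), nsmul_eq_mul]

variable [AddCommGroup α]

lemma factorial_mul_card_powersetCard_sum_eq_zero_le (n : ℕ) :
    (n + 1).factorial * #{σ ∈ powersetCard (n + 1) (univ : Finset α) | ∑ x ∈ σ, x = 0}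
      ≤ Fintype.card α ^ n := by
  have hsum := sum_injective_image_eq (α := α) (n + 1) fun σ => if ∑ x ∈ σ, x = 0 then 1 else 0
  simp only [Finset.sum_boole] at hsum
  rw [← @Nat.cast_le ℝ, Nat.cast_mul, ← hsum, Nat.cast_le, Finset.filter_filter]
  have hcard : #(univ : Finset (Fin n → α)) = Fintype.card α ^ n := by simp
  rw [← hcard]
  refine card_le_card_of_injOn Fin.tail (fun _ _ => mem_univ _) fun x hx y hy hxy => ?_
  have hzero {x : Fin (n + 1) → α} (hx : Function.Injective x ∧ ∑ a ∈ univ.image x, a = 0) :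
      x 0 = -∑ i, Fin.tail x i := by
    rw [eq_neg_iff_add_eq_zero, ← hx.2, sum_image hx.1.injOn, Fin.sum_univ_succ]
    rfl
  rw [← Fin.cons_self_tail x, ← Fin.cons_self_tail y, hzero (mem_filter.1 hx).2,
    hzero (mem_filter.1 hy).2, hxy]

lemma CylinderCorrelationLE.abs_sum_powersetCard_le {W : α → ℝ} {M : ℝ}
    (h : CylinderCorrelationLE n W M) (hW : ∀ s, |W s| ≤ 1) {f : Finset α → ℝ}
    (hf : ∀ τ, |f τ| ≤ 1) :
    n.factorial * |∑ σ ∈ powersetCard n univ, W (∑ x ∈ σ, x) * ∏ x ∈ σ, f (σ.erase x)|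
      ≤ M + #{x : Fin n → α | ¬ Function.Injective x} := by
  set G : (Fin n → α) → ℝ := fun x => W (∑ i, x i) * ∏ i, f ((univ.erase i).image x) with hG
  have hall : |∑ x, G x| ≤ M := h (fun i x => f ((univ.erase i).image x)) (fun _ _ => hf _)
    fun i x y hxy => congrArg f (image_congr fun j hj => hxy j (by simpa using hj))
  have hinj : ∑ x with Function.Injective x, G x
      = n.factorial * ∑ σ ∈ powersetCard n univ, W (∑ x ∈ σ, x) * ∏ x ∈ σ, f (σ.erase x) := by
    rw [← sum_injective_image_eq]
    refine Finset.sum_congr rfl fun x hx => ?_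
    have hx' := (mem_filter.1 hx).2
    rw [Finset.sum_image hx'.injOn, Finset.prod_image hx'.injOn]
    simp only [hG, image_erase hx']
  have hnon : |∑ x with ¬ Function.Injective x, G x|
      ≤ #{x : Fin n → α | ¬ Function.Injective x} :=
    (abs_sum_le_sum_abs _ _).trans <|
      (Finset.sum_le_card_nsmul _ _ 1 fun x _ => abs_mul_prod_le_one (hW _) fun _ => hf _).trans
        (by simp)
  rw [← Nat.abs_cast, ← abs_mul, ← hinj,
    eq_sub_of_add_eq (Finset.sum_filter_add_sum_filter_not univ Function.Injective G)]
  exact (abs_sub _ _).trans (add_le_add hall hnon)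

end InjectiveTuples

section Cochains

/-- The nontrivial character of `ZMod 2`, which turns `ZMod 2`-valued cochains into signs. -/
def signChar : AddChar (ZMod 2) ℝ where
  toFun a := if a = 0 then 1 else -1
  map_zero_eq_one' := if_pos rfl
  map_add_eq_mul' a b := by
    have htwo : (1 + 1 : ZMod 2) = 0 := rfl
    have hcases : ∀ c : ZMod 2, c = 0 ∨ c = 1 := by decide
    rcases hcases a with rfl | rfl <;> rcases hcases b with rfl | rfl <;> simp [htwo]

lemma signChar_apply (a : ZMod 2) : signChar a = if a = 0 then 1 else -1 := rfl

lemma signChar_sum {ι : Type*} (s : Finset ι) (f : ι → ZMod 2) :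
    signChar (∑ i ∈ s, f i) = ∏ i ∈ s, signChar (f i) :=
  map_prod signChar.toMonoidHom (fun i => Multiplicative.ofAdd (f i)) s

lemma abs_signChar (a : ZMod 2) : |signChar a| = 1 := by
  rw [signChar_apply]
  split_ifs <;> simp

lemma le_cosys {V : Type*} [DecidableEq V] {X : Finset (Finset V)} {k : ℕ} (hk : k ≠ 0)
    {φ : Finset V → ZMod 2} {B : ℝ}
    (h : ∀ ψ, B ≤ cnorm X k fun τ => φ τ + cob X (k - 1) ψ τ) : B ≤ cosys X k φ := by
  rw [cosys, if_neg hk]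
  obtain ⟨ψ, hψ⟩ := Nat.sInf_mem (s := {m | ∃ ψ : Finset V → ZMod 2,
    m = cnorm X k fun τ => φ τ + cob X (k - 1) ψ τ}) ⟨_, 0, rfl⟩
  rw [hψ]
  exact h ψ

/-- The full simplex on the vertex set `V`. -/
def fullSimplex (V : Type*) [Fintype V] : Finset (Finset V) :=
  univ.powerset.filter fun σ => σ.Nonempty

variable {V : Type*} [Fintype V]

lemma faces_fullSimplex (k : ℕ) : faces (fullSimplex V) k = powersetCard (k + 1) univ := by
  ext σ
  simp only [faces, fullSimplex, mem_filter, mem_powerset, mem_powersetCard, and_assoc]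
  exact ⟨fun h => ⟨h.1, h.2.2⟩, fun h => ⟨h.1, card_pos.1 (by omega), h.2⟩⟩

lemma two_mul_cnorm_fullSimplex (k : ℕ) (φ : Finset V → ZMod 2) :
    2 * (cnorm (fullSimplex V) k φ : ℝ)
      = (Fintype.card V).choose (k + 1) - ∑ σ ∈ powersetCard (k + 1) univ, signChar (φ σ) := by
  have hcard : ((Fintype.card V).choose (k + 1) : ℝ)
      = ∑ σ ∈ powersetCard (k + 1) (univ : Finset V), 1 := by simp
  rw [cnorm, csupp, faces_fullSimplex, ← Finset.sum_boole, Finset.mul_sum, hcard,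
    ← Finset.sum_sub_distrib]
  refine Finset.sum_congr rfl fun σ _ => ?_
  rw [signChar_apply]
  split_ifs <;> simp_all
  norm_num

variable [DecidableEq V]

lemma cob_fullSimplex (k : ℕ) (ψ : Finset V → ZMod 2) {σ : Finset V} (hσ : #σ = k + 2) :
    cob (fullSimplex V) k ψ σ = ∑ x ∈ σ, ψ (σ.erase x) := by
  rw [cob, faces_fullSimplex]
  symm
  refine Finset.sum_nbij σ.erase (fun x hx => ?_) (Finset.erase_injOn σ) (fun τ hτ => ?_)
    fun _ _ => rfl
  · rw [mem_filter, mem_powersetCard, card_erase_of_mem hx, hσ]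
    exact ⟨⟨subset_univ _, rfl⟩, erase_subset _ _⟩
  · rw [mem_coe, mem_filter, mem_powersetCard_univ] at hτ
    obtain ⟨x, hx⟩ := Finset.card_eq_one.1
      (show #(σ \ τ) = 1 by rw [card_sdiff_of_subset hτ.2, hσ, hτ.1]; omega)
    have hxσ : x ∈ σ \ τ := hx ▸ mem_singleton_self x
    refine ⟨x, (mem_sdiff.1 hxσ).1, ?_⟩
    rw [← sdiff_singleton_eq_erase, ← hx, Finset.sdiff_sdiff_eq_self hτ.2]

end Cochains

section PaleyCochain

variable {F : Type*} [Field F] [Fintype F] [DecidableEq F] {k : ℕ}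

/-- The Paley cochain of a finite field, in all dimensions at once: the indicator of the sets of
vertices whose sum is a nonzero square. -/
def paleyCochain (F : Type*) [Field F] [Fintype F] [DecidableEq F] (σ : Finset F) : ZMod 2 :=
  if quadraticChar F (∑ x ∈ σ, x) = 1 then 1 else 0

lemma signChar_paleyCochain (σ : Finset F) :
    signChar (paleyCochain F σ)
      = (if ∑ x ∈ σ, x = 0 then 1 else 0) - (quadraticChar F (∑ x ∈ σ, x) : ℝ) := by
  rw [paleyCochain, signChar_apply]
  rcases eq_or_ne (∑ x ∈ σ, x) 0 with h | h
  · simp [h]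
  · rcases quadraticChar_dichotomy h with hχ | hχ <;> simp [h, hχ]

lemma three_add_two_mul_choose_two_le (k : ℕ) : 3 + 2 * (k + 1).choose 2 ≤ 2 ^ (k + 2) := by
  induction k with
  | zero => decide
  | succ k ih =>
    have hpow : k + 2 ≤ 2 ^ (k + 1) := Nat.lt_two_pow_self (n := k + 1)
    calc 3 + 2 * (k + 2).choose 2 = 3 + 2 * (k + 1).choose 2 + 2 * (k + 1) := by
          rw [Nat.choose_succ_succ' (k + 1) 1, Nat.choose_one_right]; ring
      _ ≤ 2 ^ (k + 2) + 2 * 2 ^ (k + 1) := by gcongr; omega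
      _ = 2 ^ (k + 3) := by ring

lemma rpow_succ_sub_half_pow {x : ℝ} (hx : 0 < x) (k : ℕ) :
    x ^ (((k : ℝ) + 1) - (1 / 2 : ℝ) ^ k) = x ^ (k + 1) * x ^ (-(1 / 2 : ℝ) ^ k) := by
  rw [← Real.rpow_natCast x (k + 1), ← Real.rpow_add hx, sub_eq_add_neg, Nat.cast_succ]

lemma factorial_mul_card_sum_eq_zero_le_choose_div_add (k : ℕ) :
    ((k + 1).factorial : ℝ) * #{σ ∈ powersetCard (k + 1) (univ : Finset F) | ∑ x ∈ σ, x = 0}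
      ≤ (k + 1).factorial * ((Fintype.card F).choose (k + 1) / Fintype.card F)
        + (k + 1).choose 2 * (Fintype.card F : ℝ) ^ k := by
  set q : ℝ := (Fintype.card F : ℝ) with hq
  have hq1 : 1 ≤ q := Nat.one_le_cast.2 Fintype.card_pos
  have hzero : ((k + 1).factorial : ℝ)
      * #{σ ∈ powersetCard (k + 1) (univ : Finset F) | ∑ x ∈ σ, x = 0} ≤ q ^ k := by
    rw [hq]
    exact_mod_cast factorial_mul_card_powersetCard_sum_eq_zero_le (α := F) k
  have hpow : q ^ (k + 1) ≤ (k + 1).factorial * (Fintype.card F).choose (k + 1)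
      + (k + 1).choose 2 * q ^ k := by
    have h := pow_succ_le_descFactorial_add (Fintype.card F) k
    rw [Nat.descFactorial_eq_factorial_mul_choose] at h
    rw [hq]
    exact_mod_cast h
  calc _ ≤ q ^ k := hzero
    _ = q ^ (k + 1) / q := by rw [pow_succ, mul_div_cancel_right₀ _ (by positivity)]
    _ ≤ ((k + 1).factorial * (Fintype.card F).choose (k + 1) + (k + 1).choose 2 * q ^ k) / q := by
        gcongr
    _ = (k + 1).factorial * ((Fintype.card F).choose (k + 1) / q)
        + (k + 1).choose 2 * q ^ k / q := by ring
    _ ≤ (k + 1).factorial * ((Fintype.card F).choose (k + 1) / q)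
        + (k + 1).choose 2 * q ^ k := by gcongr; exact div_le_self (by positivity) hq1

lemma factorial_mul_abs_sum_quadraticChar_mul_prod_le (hF : ringChar F ≠ 2) (hk : 1 ≤ k)
    {f : Finset F → ℝ} (hf : ∀ τ, |f τ| ≤ 1) :
    (k + 1).factorial * |∑ σ ∈ powersetCard (k + 1) univ,
        (quadraticChar F (∑ x ∈ σ, x) : ℝ) * ∏ x ∈ σ, f (σ.erase x)|
      ≤ 3 * ((Fintype.card F : ℝ) ^ (k + 1) * (Fintype.card F : ℝ) ^ (-(1 / 2 : ℝ) ^ k))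
        + (k + 1).choose 2 * (Fintype.card F : ℝ) ^ k := by
  refine ((cylinderCorrelationLE_quadraticChar hF hk).abs_sum_powersetCard_le
    (fun s => mod_cast abs_quadraticChar_le_one s) hf).trans ?_
  gcongr
  exact_mod_cast card_not_injective_le (α := F) k

lemma sum_signChar_paleyCochain_mul_le_card_add (s : Finset (Finset F)) {T : Finset F → ℝ}
    (hT : ∀ σ, |T σ| ≤ 1) :
    ∑ σ ∈ s, signChar (paleyCochain F σ) * T σ
      ≤ #{σ ∈ s | ∑ x ∈ σ, x = 0} + |∑ σ ∈ s, (quadraticChar F (∑ x ∈ σ, x) : ℝ) * T σ| := by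
  have hzero : ∑ σ ∈ s with ∑ x ∈ σ, x = 0, T σ ≤ #{σ ∈ s | ∑ x ∈ σ, x = 0} :=
    (Finset.sum_le_card_nsmul _ _ 1 fun σ _ => (le_abs_self _).trans (hT σ)).trans_eq (by simp)
  simp_rw [signChar_paleyCochain, sub_mul, Finset.sum_sub_distrib, ite_mul, one_mul, zero_mul,
    ← Finset.sum_filter]
  linarith [neg_abs_le (∑ σ ∈ s, (quadraticChar F (∑ x ∈ σ, x) : ℝ) * T σ)]

lemma sum_signChar_paleyCochain_mul_le (hF : ringChar F ≠ 2) (hk : 1 ≤ k) {f : Finset F → ℝ}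
    (hf : ∀ τ, |f τ| ≤ 1) :
    ∑ σ ∈ powersetCard (k + 1) univ, signChar (paleyCochain F σ) * ∏ x ∈ σ, f (σ.erase x)
      ≤ (Fintype.card F).choose (k + 1) / Fintype.card F + 2 ^ (k + 2) / (k + 1).factorial *
        (Fintype.card F : ℝ) ^ (((k : ℝ) + 1) - (1 / 2 : ℝ) ^ k) := by
  set Z := #{σ ∈ powersetCard (k + 1) (univ : Finset F) | ∑ x ∈ σ, x = 0}
  set S := ∑ σ ∈ powersetCard (k + 1) (univ : Finset F),
    (quadraticChar F (∑ x ∈ σ, x) : ℝ) * ∏ x ∈ σ, f (σ.erase x)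
  set q : ℝ := (Fintype.card F : ℝ)
  set E : ℝ := q ^ (k + 1) * q ^ (-(1 / 2 : ℝ) ^ k)
  have hq1 : 1 ≤ q := Nat.one_le_cast.2 Fintype.card_pos
  have hqE : q ^ k ≤ E := by
    calc q ^ k ≤ q ^ k * (q * q ^ (-(1 / 2 : ℝ) ^ k)) :=
          le_mul_of_one_le_right (by positivity) (one_le_mul_rpow_neg_half_pow hq1 k)
      _ = E := by rw [← mul_assoc, ← pow_succ]
  have hsum : ∑ σ ∈ powersetCard (k + 1) univ,
      signChar (paleyCochain F σ) * ∏ x ∈ σ, f (σ.erase x) ≤ Z + |S| :=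
    sum_signChar_paleyCochain_mul_le_card_add _ fun σ => by
      simpa using abs_mul_prod_le_one (s := σ) (w := 1) (by simp) fun x => hf (σ.erase x)
  have hS : (k + 1).factorial * |S| ≤ 3 * E + (k + 1).choose 2 * q ^ k :=
    factorial_mul_abs_sum_quadraticChar_mul_prod_le hF hk hf
  have hZ := factorial_mul_card_sum_eq_zero_le_choose_div_add (F := F) k
  have hconst : (3 + 2 * (k + 1).choose 2 : ℝ) ≤ 2 ^ (k + 2) := by
    exact_mod_cast three_add_two_mul_choose_two_le k
  have hfact : (0 : ℝ) < (k + 1).factorial := Nat.cast_pos.2 (Nat.factorial_pos _)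
  rw [rpow_succ_sub_half_pow (by positivity)]
  refine hsum.trans (le_of_mul_le_mul_left ?_ hfact)
  calc (k + 1).factorial * (Z + |S|)
      ≤ (k + 1).factorial * ((Fintype.card F).choose (k + 1) / q)
        + (3 * E + 2 * ((k + 1).choose 2 * q ^ k)) := by linarith
    _ ≤ (k + 1).factorial * ((Fintype.card F).choose (k + 1) / q)
        + (3 * E + 2 * ((k + 1).choose 2 * E)) := by gcongr
    _ = (k + 1).factorial * ((Fintype.card F).choose (k + 1) / q)
        + (3 + 2 * (k + 1).choose 2) * E := by ring
    _ ≤ (k + 1).factorial * ((Fintype.card F).choose (k + 1) / q) + 2 ^ (k + 2) * E := by gcongr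
    _ = (k + 1).factorial * ((Fintype.card F).choose (k + 1) / q
        + 2 ^ (k + 2) / (k + 1).factorial * E) := by field_simp

theorem paley_cochain_cosystole_general (hF : ringChar F ≠ 2) (hk : 1 ≤ k) :
    ((Fintype.card F : ℝ) - 1) / (2 * Fintype.card F) * (Fintype.card F).choose (k + 1) -
        2 ^ (k + 1) / (k + 1).factorial *
          (Fintype.card F : ℝ) ^ (((k : ℝ) + 1) - (1 / 2 : ℝ) ^ k) ≤
      cosys (fullSimplex F) k (paleyCochain F) := by
  refine le_cosys (Nat.ne_of_gt hk) fun ψ => ?_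
  have hsum := sum_signChar_paleyCochain_mul_le hF hk fun τ => (abs_signChar (ψ τ)).le
  have hnorm := two_mul_cnorm_fullSimplex k fun τ =>
    paleyCochain F τ + cob (fullSimplex F) (k - 1) ψ τ
  have hsign : ∀ σ ∈ powersetCard (k + 1) (univ : Finset F),
      signChar (paleyCochain F σ + cob (fullSimplex F) (k - 1) ψ σ)
        = signChar (paleyCochain F σ) * ∏ x ∈ σ, signChar (ψ (σ.erase x)) := fun σ hσ => by
    rw [AddChar.map_add_eq_mul, cob_fullSimplex _ _ (by rw [mem_powersetCard_univ.1 hσ]; omega),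
      signChar_sum]
  rw [Finset.sum_congr rfl hsign] at hnorm
  have hq : (Fintype.card F : ℝ) ≠ 0 := Nat.cast_ne_zero.2 Fintype.card_ne_zero
  have hmain : ((Fintype.card F : ℝ) - 1) / (2 * Fintype.card F) * (Fintype.card F).choose (k + 1)
      = ((Fintype.card F).choose (k + 1)
        - (Fintype.card F).choose (k + 1) / Fintype.card F) / 2 := by field_simp
  rw [pow_succ, mul_div_right_comm, mul_right_comm] at hsum
  rw [hmain]
  linarith

end PaleyCochain

/-- **Cosystolic norm of the Paley cochain**: for an odd prime `p` and `1 ≤ k < p`, the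
Paley `k`-cochain `φ_k` on the full simplex on `F_p` (the indicator of the `k`-faces whose
vertex sum is a nonzero quadratic residue) satisfies
`‖φ_k‖_csy ≥ ((p-1)/(2p)) C(p, k+1) - (2^{k+1}/(k+1)!) p^{k+1-2^{-k}}`. -/
theorem paley_cochain_cosystole {p : ℕ} [Fact p.Prime] (hodd : Odd p)
    (k : ℕ) (hk1 : 1 ≤ k) (hkp : k < p)
    (X : Finset (Finset (ZMod p)))
    (hXdef : X = Finset.univ.powerset.filter fun σ : Finset (ZMod p) => σ.Nonempty)
    (φ : Finset (ZMod p) → ZMod 2)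
    (hφ : ∀ σ : Finset (ZMod p),
      φ σ = if legendreSym p ((∑ x ∈ σ, x).val : ℤ) = 1 then 1 else 0) :
    ((p : ℝ) - 1) / (2 * (p : ℝ)) * (Nat.choose p (k + 1) : ℝ) -
        (2 ^ (k + 1) : ℝ) / ((Nat.factorial (k + 1)) : ℝ) *
          (p : ℝ) ^ (((k : ℝ) + 1) - (1 / 2 : ℝ) ^ k) ≤
      (cosys X k φ : ℝ) := by
  have hX : X = fullSimplex (ZMod p) := hXdef
  have hpaley : φ = paleyCochain (ZMod p) := funext fun σ => by
    simp [hφ, paleyCochain, legendreSym]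
  have hchar : ringChar (ZMod p) ≠ 2 := by
    rw [ZMod.ringChar_zmod_n]
    exact hodd.ne_two_of_dvd_nat dvd_rfl
  rw [hX, hpaley]
  simpa only [ZMod.card] using paley_cochain_cosystole_general hchar hk1
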